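/- arXiv:2403.20243 — 2 statements merged into one kernel-verified Lean document; each statement's English description precedes it below -/
import Mathlib

section
/- Fix m ≥ 2, let n₊, n₋ ∈ ℕ with n₊ + n₋ = m, and define T : ℝ^{n₊} × ℝ^{n₋} → ℝ by T(x₊, x₋) = ‖x₊‖² − ‖x₋‖². Fix ρ > 0 and k ∈ ℕ. Then there exists a constant A > 0 such that for every t ∈ (0, 1/2] the integral ∫ ‖x‖^{−k} dℋ^{m−1}(x), taken over the level set {x ∈ ℝ^m : ‖x‖ ≤ ρ, T(x) = t}, is at most: A, if k ≤ m − 2; A·log(1/t), if k = m − 1; and A·t^{−(1+k−m)/2}, if k ≥ m. -/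
open MeasureTheory

/-- The standard quadratic Morse model `T(x₊, x₋) = ‖x₊‖² − ‖x₋‖²` on
`ℝ^{np} × ℝ^{nm}`, realized on `EuclideanSpace ℝ (Fin np ⊕ Fin nm)`. -/
noncomputable def quadMorseModel (np nm : ℕ)
    (x : EuclideanSpace ℝ (Fin np ⊕ Fin nm)) : ℝ :=
  (∑ i : Fin np, x (Sum.inl i) ^ 2) - ∑ j : Fin nm, x (Sum.inr j) ^ 2

/-!
The `(m - 1)`-dimensional area of a level set of a nondegenerate diagonal quadratic form inside
the ball of radius `r` is `O(r ^ (m - 1))`, uniformly in the level: on each of the `2m` cones over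
the faces of the cube, where one coordinate dominates all others, the level set is a Lipschitz
graph over the remaining coordinates, with a constant that depends only on the form.

So `1 / ‖x‖` lies in weak `L ^ (m - 1)` of the level set `T = t`, with a bound independent of `t`,
and there it takes values between `1 / ρ` and a multiple of `1 / √t`. By the layer-cake formula
the integral of `‖x‖ ^ (-k)` is then controlled by that of `u ^ (k - m)` over this range of
values, which produces the three regimes.
-/

open Set
open scoped ENNReal NNReal

section WeakType

variable {X : Type*} [MeasurableSpace X] {μ : Measure X} {g : X → ℝ} {C : ℝ≥0∞} {a b p q : ℝ}

/-- The weak `L ^ q` bound for the superlevel sets of a function `g`. The constant `C` bounds the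
`q`-th power of the usual weak `L ^ q` quasinorm of the positive part of `g`. -/
def HasWeakTypeBound (g : X → ℝ) (C : ℝ≥0∞) (q : ℝ) (μ : Measure X) : Prop :=
  ∀ u > 0, μ {x | u ≤ g x} ≤ C * ENNReal.ofReal (u ^ (-q))

lemma lintegral_Ioc_zero_rpow_sub_one (ha : 0 ≤ a) (hp : 0 < p) :
    ∫⁻ u in Ioc 0 a, ENNReal.ofReal (u ^ (p - 1)) = ENNReal.ofReal (a ^ p / p) := by
  have hint : IntegrableOn (fun u : ℝ ↦ u ^ (p - 1)) (Ioc 0 a) :=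
    (intervalIntegrable_iff_integrableOn_Ioc_of_le ha).1
      (intervalIntegral.intervalIntegrable_rpow' (by linarith))
  have hnonneg : ∀ u ∈ Ioc 0 a, 0 ≤ u ^ (p - 1) := fun u hu ↦ Real.rpow_nonneg hu.1.le _
  rw [← ofReal_integral_eq_lintegral_ofReal hint
      (ae_restrict_of_forall_mem measurableSet_Ioc hnonneg),
    ← intervalIntegral.integral_of_le ha, integral_rpow (Or.inl (by linarith)), sub_add_cancel,
    Real.zero_rpow hp.ne', sub_zero]

lemma lintegral_rpow_eq_add_lintegral_Ioi_meas_le_mul (hg : AEMeasurable g μ) (ha : 0 ≤ a)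
    (hag : ∀ᵐ x ∂μ, a ≤ g x) (hp : 0 < p) :
    ∫⁻ x, ENNReal.ofReal (g x ^ p) ∂μ = ENNReal.ofReal (a ^ p) * μ univ +
      ENNReal.ofReal p * ∫⁻ u in Ioi a, μ {x | u ≤ g x} * ENNReal.ofReal (u ^ (p - 1)) := by
  have hfull : ∀ u ∈ Ioc 0 a, μ {x | u ≤ g x} = μ univ := fun u hu ↦
    measure_congr <| Filter.eventuallyEq_univ.2 <| hag.mono fun x hx ↦ hu.2.trans hx
  have hlow : ∫⁻ u in Ioc 0 a, μ {x | u ≤ g x} * ENNReal.ofReal (u ^ (p - 1)) =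
      μ univ * ENNReal.ofReal (a ^ p / p) := by
    rw [setLIntegral_congr_fun measurableSet_Ioc fun u hu ↦ by rw [hfull u hu],
      lintegral_const_mul _ (by fun_prop), lintegral_Ioc_zero_rpow_sub_one ha hp]
  rw [lintegral_rpow_eq_lintegral_meas_le_mul _ (hag.mono fun x hx ↦ ha.trans hx) hg hp,
    ← Ioc_union_Ioi_eq_Ioi ha, lintegral_union measurableSet_Ioi (Ioc_disjoint_Ioi le_rfl), hlow,
    mul_add, mul_left_comm, ← ENNReal.ofReal_mul hp.le, mul_div_cancel₀ _ hp.ne', mul_comm (μ univ)]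

lemma HasWeakTypeBound.lintegral_meas_le_mul_rpow_le (hweak : HasWeakTypeBound g C q μ)
    {J : Set ℝ} (hJ : MeasurableSet J) (hJpos : J ⊆ Ioi 0)
    (hint : IntegrableOn (fun u : ℝ ↦ u ^ (p - q - 1)) J) :
    ∫⁻ u in J, μ {x | u ≤ g x} * ENNReal.ofReal (u ^ (p - 1)) ≤
      C * ENNReal.ofReal (∫ u in J, u ^ (p - q - 1)) := by
  have hnonneg : ∀ u ∈ J, 0 ≤ u ^ (p - q - 1) := fun u hu ↦ Real.rpow_nonneg (hJpos hu).le _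
  calc ∫⁻ u in J, μ {x | u ≤ g x} * ENNReal.ofReal (u ^ (p - 1))
      ≤ ∫⁻ u in J, C * ENNReal.ofReal (u ^ (p - q - 1)) := by
        refine setLIntegral_mono' hJ fun u hu ↦ ?_
        have hu : 0 < u := hJpos hu
        calc μ {x | u ≤ g x} * ENNReal.ofReal (u ^ (p - 1))
            ≤ C * ENNReal.ofReal (u ^ (-q)) * ENNReal.ofReal (u ^ (p - 1)) := by
              gcongr; exact hweak u hu
          _ = C * ENNReal.ofReal (u ^ (p - q - 1)) := by
              rw [mul_assoc, ← ENNReal.ofReal_mul (by positivity), ← Real.rpow_add hu]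
              ring_nf
    _ = C * ENNReal.ofReal (∫ u in J, u ^ (p - q - 1)) := by
        rw [lintegral_const_mul _ (by fun_prop),
          ofReal_integral_eq_lintegral_ofReal hint (ae_restrict_of_forall_mem hJ hnonneg)]

lemma HasWeakTypeBound.measure_univ_le (hweak : HasWeakTypeBound g C q μ)
    (ha : 0 < a) (hag : ∀ᵐ x ∂μ, a ≤ g x) :
    μ univ ≤ C * ENNReal.ofReal (a ^ (-q)) := by
  rw [← measure_congr (Filter.eventuallyEq_univ.2 hag)]
  exact hweak a ha

lemma lintegral_Ioi_meas_le_mul_eq_Ioc {h : ℝ → ℝ≥0∞} (hab : a ≤ b) (hgb : ∀ᵐ x ∂μ, g x ≤ b) :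
    ∫⁻ u in Ioi a, μ {x | u ≤ g x} * h u = ∫⁻ u in Ioc a b, μ {x | u ≤ g x} * h u := by
  have hnull : ∀ u ∈ Ioi b, μ {x | u ≤ g x} = 0 := fun u hu ↦
    measure_eq_zero_iff_ae_notMem.2 <| hgb.mono fun x hx ↦ (hx.trans_lt hu).not_ge
  rw [← Ioc_union_Ioi_eq_Ioi hab, lintegral_union measurableSet_Ioi (Ioc_disjoint_Ioi le_rfl),
    setLIntegral_congr_fun measurableSet_Ioi fun u hu ↦ by rw [hnull u hu, zero_mul],
    lintegral_zero, add_zero]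

lemma HasWeakTypeBound.lintegral_rpow_le_of_lt (hweak : HasWeakTypeBound g C q μ)
    (hg : AEMeasurable g μ) (ha : 0 < a) (hag : ∀ᵐ x ∂μ, a ≤ g x) (hp : 0 ≤ p) (hpq : p < q) :
    ∫⁻ x, ENNReal.ofReal (g x ^ p) ∂μ ≤ C * ENNReal.ofReal (q / (q - p) * a ^ (p - q)) := by
  have huniv := hweak.measure_univ_le ha hag
  rcases hp.eq_or_lt with rfl | hp
  · simpa [div_self hpq.ne'] using huniv
  have hqp : 0 < q - p := sub_pos.2 hpq
  have hint : IntegrableOn (fun u : ℝ ↦ u ^ (p - q - 1)) (Ioi a) :=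
    integrableOn_Ioi_rpow_of_lt (by linarith) ha
  have htail := hweak.lintegral_meas_le_mul_rpow_le measurableSet_Ioi (Ioi_subset_Ioi ha.le) hint
  rw [integral_Ioi_rpow_of_lt (by linarith) ha, sub_add_cancel, neg_div,
    ← div_neg, neg_sub] at htail
  calc ∫⁻ x, ENNReal.ofReal (g x ^ p) ∂μ
      ≤ ENNReal.ofReal (a ^ p) * (C * ENNReal.ofReal (a ^ (-q))) +
          ENNReal.ofReal p * (C * ENNReal.ofReal (a ^ (p - q) / (q - p))) := by
        rw [lintegral_rpow_eq_add_lintegral_Ioi_meas_le_mul hg ha.le hag hp]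
        gcongr
    _ = C * ENNReal.ofReal (a ^ p * a ^ (-q) + p * (a ^ (p - q) / (q - p))) := by
        rw [ENNReal.ofReal_add (by positivity) (by positivity), ENNReal.ofReal_mul (by positivity),
          ENNReal.ofReal_mul hp.le]
        ring
    _ = C * ENNReal.ofReal (q / (q - p) * a ^ (p - q)) := by
        rw [← Real.rpow_add ha, ← sub_eq_add_neg]
        congr 2
        field_simp
        ring

lemma HasWeakTypeBound.lintegral_rpow_self_le (hweak : HasWeakTypeBound g C q μ)
    (hg : AEMeasurable g μ) (ha : 0 < a) (hag : ∀ᵐ x ∂μ, a ≤ g x) (hgb : ∀ᵐ x ∂μ, g x ≤ b)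
    (hq : 0 ≤ q) :
    ∫⁻ x, ENNReal.ofReal (g x ^ q) ∂μ ≤ C * ENNReal.ofReal (1 + q * Real.log (b / a)) := by
  have huniv := hweak.measure_univ_le ha hag
  rcases eq_zero_or_neZero μ with rfl | _
  · simp
  have hab : a ≤ b := by
    obtain ⟨x, hax, hxb⟩ := (hag.and hgb).exists
    exact hax.trans hxb
  rcases hq.eq_or_lt with rfl | hq
  · simpa using huniv
  have hlog : 0 ≤ Real.log (b / a) := Real.log_nonneg ((one_le_div ha).2 hab)
  have hint : IntegrableOn (fun u : ℝ ↦ u ^ (q - q - 1)) (Ioc a b) :=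
    (intervalIntegrable_iff_integrableOn_Ioc_of_le hab).1 <|
      intervalIntegral.intervalIntegrable_rpow (Or.inr (notMem_uIcc_of_lt ha (ha.trans_le hab)))
  have hmid := hweak.lintegral_meas_le_mul_rpow_le measurableSet_Ioc
    (Ioc_subset_Ioi_self.trans (Ioi_subset_Ioi ha.le)) hint
  simp only [sub_self, zero_sub, Real.rpow_neg_one] at hmid
  rw [← intervalIntegral.integral_of_le hab, integral_inv_of_pos ha (ha.trans_le hab)] at hmid
  calc ∫⁻ x, ENNReal.ofReal (g x ^ q) ∂μ
      ≤ ENNReal.ofReal (a ^ q) * (C * ENNReal.ofReal (a ^ (-q))) +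
          ENNReal.ofReal q * (C * ENNReal.ofReal (Real.log (b / a))) := by
        rw [lintegral_rpow_eq_add_lintegral_Ioi_meas_le_mul hg ha.le hag hq,
          lintegral_Ioi_meas_le_mul_eq_Ioc hab hgb]
        gcongr
    _ = C * ENNReal.ofReal (a ^ q * a ^ (-q) + q * Real.log (b / a)) := by
        rw [ENNReal.ofReal_add (by positivity) (by positivity), ENNReal.ofReal_mul (by positivity),
          ENNReal.ofReal_mul hq.le]
        ring
    _ = C * ENNReal.ofReal (1 + q * Real.log (b / a)) := by
        rw [← Real.rpow_add ha, add_neg_cancel, Real.rpow_zero]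

lemma HasWeakTypeBound.lintegral_rpow_le_of_gt (hweak : HasWeakTypeBound g C q μ)
    (hg : AEMeasurable g μ) (hg0 : ∀ᵐ x ∂μ, 0 ≤ g x)
    (hgb : ∀ᵐ x ∂μ, g x ≤ b) (hb : 0 ≤ b) (hp : 0 < p) (hqp : q < p) :
    ∫⁻ x, ENNReal.ofReal (g x ^ p) ∂μ ≤ C * ENNReal.ofReal (p / (p - q) * b ^ (p - q)) := by
  have hpq : 0 < p - q := sub_pos.2 hqp
  have hint : IntegrableOn (fun u : ℝ ↦ u ^ (p - q - 1)) (Ioc 0 b) :=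
    (intervalIntegrable_iff_integrableOn_Ioc_of_le hb).1
      (intervalIntegral.intervalIntegrable_rpow' (by linarith))
  have hbulk := hweak.lintegral_meas_le_mul_rpow_le measurableSet_Ioc Ioc_subset_Ioi_self hint
  rw [← intervalIntegral.integral_of_le hb, integral_rpow (Or.inl (by linarith)), sub_add_cancel,
    Real.zero_rpow hpq.ne', sub_zero] at hbulk
  calc ∫⁻ x, ENNReal.ofReal (g x ^ p) ∂μ
      ≤ ENNReal.ofReal p * (C * ENNReal.ofReal (b ^ (p - q) / (p - q))) := by
        rw [lintegral_rpow_eq_lintegral_meas_le_mul _ hg0 hg hp,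
          lintegral_Ioi_meas_le_mul_eq_Ioc hb hgb]
        gcongr
    _ = C * ENNReal.ofReal (p / (p - q) * b ^ (p - q)) := by
        rw [mul_left_comm, ← ENNReal.ofReal_mul hp.le]
        congr 2
        ring

end WeakType

section Hausdorff

lemma hausdorffMeasure_le_of_antilipschitzWith_domRestrict {X Y : Type*} [EMetricSpace X]
    [MeasurableSpace X] [BorelSpace X] [EMetricSpace Y] [MeasurableSpace Y] [BorelSpace Y]
    {K : ℝ≥0} {d : ℝ} {f : X → Y} {S : Set X} (hd : 0 ≤ d)
    (hf : AntilipschitzWith K (S.domRestrict f)) :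
    μH[d] S ≤ (K : ℝ≥0∞) ^ d * μH[d] (f '' S) := by
  have hcoe : μH[d] S = μH[d] (univ : Set S) := by
    rw [← (isometry_subtype_coe (s := S)).hausdorffMeasure_image (Or.inl hd), image_univ,
      Subtype.range_coe]
  rw [hcoe, ← range_domRestrict, ← image_univ]
  exact hf.le_hausdorffMeasure_image hd univ

variable {ι : Type*} [Fintype ι]

lemma hausdorffMeasure_le_of_subset_closedBall_pi {S : Set (ι → ℝ)} {r : ℝ} (hr : 0 ≤ r)
    (hS : S ⊆ Metric.closedBall 0 r) :
    μH[Fintype.card ι] S ≤ ENNReal.ofReal ((2 * r) ^ Fintype.card ι) := by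
  rw [hausdorffMeasure_pi_real, ← Real.volume_pi_closedBall 0 hr]
  exact measure_mono hS

/-- The cone over the face of the unit cube on which the `i`-th coordinate equals `ε = ±1`. It
consists of the vectors whose supremum norm is attained at the coordinate `i`, with sign `ε`. -/
def cubeFaceCone (i : ι) (ε : ℤˣ) : Set (ι → ℝ) := {x | ((ε : ℤ) : ℝ) * x i = ‖x‖}

lemma exists_mem_cubeFaceCone [Nonempty ι] (x : ι → ℝ) : ∃ i ε, x ∈ cubeFaceCone i ε := by
  obtain ⟨i, hi⟩ := Finite.exists_max fun j ↦ ‖x j‖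
  have hnorm : |x i| = ‖x‖ :=
    (norm_le_pi_norm x i).antisymm ((pi_norm_le_iff_of_nonneg (norm_nonneg _)).2 hi)
  rcases abs_choice (x i) with h | h
  · exact ⟨i, 1, by simpa [cubeFaceCone, h] using hnorm⟩
  · exact ⟨i, -1, by simpa [cubeFaceCone, h] using hnorm⟩

lemma abs_add_eq_of_mem_cubeFaceCone {i : ι} {ε : ℤˣ} {x y : ι → ℝ} (hx : x ∈ cubeFaceCone i ε)
    (hy : y ∈ cubeFaceCone i ε) : |x i + y i| = ‖x‖ + ‖y‖ := by
  have hsum : ((ε : ℤ) : ℝ) * (x i + y i) = ‖x‖ + ‖y‖ := by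
    rw [mul_add, show _ = _ from hx, show _ = _ from hy]
  have hε : |((ε : ℤ) : ℝ)| = 1 := by exact_mod_cast Int.isUnit_iff_abs_eq.1 ε.isUnit
  rw [← abs_of_nonneg (by positivity : 0 ≤ ‖x‖ + ‖y‖), ← hsum, abs_mul, hε, one_mul]

lemma abs_sq_sub_sq_le_pi (x y : ι → ℝ) (j : ι) :
    |x j ^ 2 - y j ^ 2| ≤ |x j - y j| * (‖x‖ + ‖y‖) := by
  rw [sq_sub_sq, abs_mul, mul_comm]
  gcongr
  exact (abs_add_le _ _).trans (add_le_add (norm_le_pi_norm x j) (norm_le_pi_norm y j))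

lemma one_le_sum_abs_div {w : ι → ℝ} {i : ι} (hi : w i ≠ 0) : 1 ≤ ∑ j, |w j / w i| := by
  calc 1 = |w i / w i| := by rw [div_self hi, abs_one]
    _ ≤ ∑ j, |w j / w i| :=
      Finset.single_le_sum (f := fun j ↦ |w j / w i|) (fun _ _ ↦ abs_nonneg _) (Finset.mem_univ i)

lemma sq_sub_sq_eq_neg_sum_erase [DecidableEq ι] {w x y : ι → ℝ} {i : ι} (hi : w i ≠ 0)
    (hxy : ∑ j, w j * x j ^ 2 = ∑ j, w j * y j ^ 2) :
    x i ^ 2 - y i ^ 2 = -∑ j ∈ Finset.univ.erase i, w j / w i * (x j ^ 2 - y j ^ 2) := by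
  have hzero : ∑ j, w j / w i * (x j ^ 2 - y j ^ 2) = 0 := by
    simp only [div_mul_eq_mul_div, mul_sub, Finset.sum_sub_distrib, ← Finset.sum_div]
    rw [hxy, sub_self]
  rw [← Finset.add_sum_erase _ _ (Finset.mem_univ i), div_self hi, one_mul] at hzero
  exact eq_neg_of_add_eq_zero_left hzero

-- On the cone `|x i + y i|` dominates every `|x j + y j|`, so dividing by it is harmless.
lemma abs_apply_sub_le_of_sum_mul_sq_eq {w : ι → ℝ} {i : ι} {ε : ℤˣ} {x y : ι → ℝ} {D : ℝ}
    (hi : w i ≠ 0) (hx : x ∈ cubeFaceCone i ε) (hy : y ∈ cubeFaceCone i ε)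
    (hxy : ∑ j, w j * x j ^ 2 = ∑ j, w j * y j ^ 2) (hD : ∀ j ≠ i, |x j - y j| ≤ D)
    (hD0 : 0 ≤ D) :
    |x i - y i| ≤ (∑ j, |w j / w i|) * D := by
  classical
  rcases (by positivity : 0 ≤ ‖x‖ + ‖y‖).eq_or_lt with hzero | hpos
  · have hx0 : x = 0 := norm_eq_zero.1 (by linarith [norm_nonneg x, norm_nonneg y])
    have hy0 : y = 0 := norm_eq_zero.1 (by linarith [norm_nonneg x, norm_nonneg y])
    simp only [hx0, hy0, sub_self, Pi.zero_apply, abs_zero]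
    positivity
  refine le_of_mul_le_mul_right ?_ hpos
  calc |x i - y i| * (‖x‖ + ‖y‖) = |x i ^ 2 - y i ^ 2| := by
        rw [← abs_add_eq_of_mem_cubeFaceCone hx hy, ← abs_mul, sq_sub_sq, mul_comm]
    _ ≤ ∑ j ∈ Finset.univ.erase i, |w j / w i * (x j ^ 2 - y j ^ 2)| := by
        rw [sq_sub_sq_eq_neg_sum_erase hi hxy, abs_neg]
        exact Finset.abs_sum_le_sum_abs _ _
    _ ≤ ∑ j ∈ Finset.univ.erase i, |w j / w i| * (D * (‖x‖ + ‖y‖)) := by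
        refine Finset.sum_le_sum fun j hj ↦ ?_
        rw [abs_mul]
        gcongr
        exact (abs_sq_sub_sq_le_pi x y j).trans
          (by gcongr; exact hD j (Finset.ne_of_mem_erase hj))
    _ ≤ ∑ j, |w j / w i| * (D * (‖x‖ + ‖y‖)) :=
        Finset.sum_le_sum_of_subset_of_nonneg (Finset.erase_subset _ _) fun _ _ _ ↦ by positivity
    _ = (∑ j, |w j / w i|) * D * (‖x‖ + ‖y‖) := by rw [← Finset.sum_mul, mul_assoc]

lemma dist_le_of_sum_mul_sq_eq [DecidableEq ι] {w : ι → ℝ} {i : ι} {ε : ℤˣ} {x y : ι → ℝ}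
    (hi : w i ≠ 0) (hx : x ∈ cubeFaceCone i ε) (hy : y ∈ cubeFaceCone i ε)
    (hxy : ∑ j, w j * x j ^ 2 = ∑ j, w j * y j ^ 2) :
    dist x y ≤ (∑ j, |w j / w i|) * dist (fun j : {j // j ≠ i} ↦ x j) (fun j ↦ y j) := by
  set D := dist (fun j : {j // j ≠ i} ↦ x j) (fun j ↦ y j)
  have hD : ∀ j ≠ i, |x j - y j| ≤ D := fun j hj ↦
    dist_le_pi_dist (fun j : {j // j ≠ i} ↦ x j) (fun j ↦ y j) ⟨j, hj⟩
  refine (dist_pi_le_iff (by positivity)).2 fun j ↦ ?_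
  rw [Real.dist_eq]
  rcases eq_or_ne j i with rfl | hj
  · exact abs_apply_sub_le_of_sum_mul_sq_eq hi hx hy hxy hD dist_nonneg
  · exact (hD j hj).trans (le_mul_of_one_le_left dist_nonneg (one_le_sum_abs_div hi))

/-- The part of the level set `∑ i, w i * x i ^ 2 = t` of a diagonal quadratic form that lies in
the closed Euclidean ball of radius `r` about the origin. -/
def diagLevelSet (w : ι → ℝ) (t r : ℝ) : Set (EuclideanSpace ℝ ι) :=
  {x | ‖x‖ ≤ r ∧ ∑ i, w i * x i ^ 2 = t}

lemma isClosed_diagLevelSet (w : ι → ℝ) (t r : ℝ) : IsClosed (diagLevelSet w t r) :=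
  (isClosed_le continuous_norm continuous_const).inter (isClosed_eq (by fun_prop) continuous_const)

lemma antilipschitzWith_domRestrict_diagLevelSet [DecidableEq ι] {w : ι → ℝ} {i : ι}
    (hi : w i ≠ 0) (ε : ℤˣ) (t r : ℝ) :
    AntilipschitzWith ((Fintype.card ι : ℝ≥0) ^ (1 / 2 : ℝ) * ∑ j, ‖w j / w i‖₊)
      ((diagLevelSet w t r ∩ WithLp.ofLp ⁻¹' cubeFaceCone i ε).domRestrict
        fun x (j : {j // j ≠ i}) ↦ x j) := by
  refine AntilipschitzWith.of_le_mul_dist ?_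
  rintro ⟨x, hx⟩ ⟨y, hy⟩
  have hsup : dist x y ≤
      (Fintype.card ι : ℝ) ^ (1 / 2 : ℝ) * dist (WithLp.ofLp x) (WithLp.ofLp y) := by
    simpa using (PiLp.antilipschitzWith_ofLp 2 fun _ : ι ↦ ℝ).le_mul_dist x y
  have hproj := dist_le_of_sum_mul_sq_eq hi hx.2 hy.2 (hx.1.2.trans hy.1.2.symm)
  push_cast
  rw [mul_assoc]
  exact hsup.trans (by gcongr; exact hproj)

lemma exists_hausdorffMeasure_diagLevelSet_inter_cubeFaceCone_le {w : ι → ℝ} {i : ι}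
    (hi : w i ≠ 0) (ε : ℤˣ) :
    ∃ C : ℝ≥0, ∀ t r : ℝ, 0 ≤ r →
      μH[(Fintype.card ι : ℝ) - 1] (diagLevelSet w t r ∩ WithLp.ofLp ⁻¹' cubeFaceCone i ε) ≤
        C * ENNReal.ofReal (r ^ ((Fintype.card ι : ℝ) - 1)) := by
  classical
  have hcard : (Fintype.card ι : ℝ) - 1 = Fintype.card {j // j ≠ i} := by
    have := Fintype.card_pos_iff.2 ⟨i⟩
    simp [Fintype.card_subtype_compl, Nat.cast_sub this]
  set K : ℝ≥0 := (Fintype.card ι : ℝ≥0) ^ (1 / 2 : ℝ) * ∑ j, ‖w j / w i‖₊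
  rw [hcard]
  refine ⟨(K * 2) ^ Fintype.card {j // j ≠ i}, fun t r hr ↦ ?_⟩
  set S := diagLevelSet w t r ∩ WithLp.ofLp ⁻¹' cubeFaceCone i ε
  have hball : (fun (x : EuclideanSpace ℝ ι) (j : {j // j ≠ i}) ↦ x j) '' S ⊆
      Metric.closedBall 0 r := by
    rintro _ ⟨x, hx, rfl⟩
    rw [mem_closedBall_zero_iff, pi_norm_le_iff_of_nonneg hr]
    exact fun j ↦ (PiLp.norm_apply_le x j).trans hx.1.1
  calc μH[Fintype.card {j // j ≠ i}] S
      ≤ (K : ℝ≥0∞) ^ (Fintype.card {j // j ≠ i} : ℝ) *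
          ENNReal.ofReal ((2 * r) ^ Fintype.card {j // j ≠ i}) :=
        (hausdorffMeasure_le_of_antilipschitzWith_domRestrict (Nat.cast_nonneg _)
          (antilipschitzWith_domRestrict_diagLevelSet hi ε t r)).trans
          (by gcongr; exact hausdorffMeasure_le_of_subset_closedBall_pi hr hball)
    _ = _ := by
        rw [ENNReal.rpow_natCast, Real.rpow_natCast, mul_pow, ENNReal.ofReal_mul (by positivity),
          ← mul_assoc, ENNReal.ofReal_pow zero_le_two, ENNReal.ofReal_ofNat, ← mul_pow]
        norm_cast

lemma exists_hausdorffMeasure_diagLevelSet_le [Nonempty ι] {w : ι → ℝ} (hw : ∀ i, w i ≠ 0) :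
    ∃ C : ℝ≥0, 0 < C ∧ ∀ t r : ℝ, 0 ≤ r →
      μH[(Fintype.card ι : ℝ) - 1] (diagLevelSet w t r) ≤
        C * ENNReal.ofReal (r ^ ((Fintype.card ι : ℝ) - 1)) := by
  choose C hC using fun q : ι × ℤˣ ↦
    exists_hausdorffMeasure_diagLevelSet_inter_cubeFaceCone_le (hw q.1) q.2
  refine ⟨∑ q, C q + 1, by positivity, fun t r hr ↦ ?_⟩
  have hcover : diagLevelSet w t r ⊆
      ⋃ q : ι × ℤˣ, diagLevelSet w t r ∩ WithLp.ofLp ⁻¹' cubeFaceCone q.1 q.2 := fun x hx ↦ by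
    obtain ⟨i, ε, hiε⟩ := exists_mem_cubeFaceCone (WithLp.ofLp x)
    exact mem_iUnion.2 ⟨(i, ε), hx, hiε⟩
  calc μH[(Fintype.card ι : ℝ) - 1] (diagLevelSet w t r)
      ≤ ∑ q, C q * ENNReal.ofReal (r ^ ((Fintype.card ι : ℝ) - 1)) :=
        (measure_mono hcover).trans <| (measure_iUnion_fintype_le _ _).trans <|
          Finset.sum_le_sum fun q _ ↦ hC q t r hr
    _ = (∑ q, C q : ℝ≥0) * ENNReal.ofReal (r ^ ((Fintype.card ι : ℝ) - 1)) := by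
        rw [← Finset.sum_mul, ENNReal.ofNNReal_finsetSum]
    _ ≤ _ := by
        gcongr
        exact le_self_add

end Hausdorff

section LevelSetIntegral

variable {ι : Type*} [Fintype ι] {w : ι → ℝ} {t r : ℝ}

lemma le_sum_abs_mul_norm_sq_of_mem_diagLevelSet {x : EuclideanSpace ℝ ι}
    (hx : x ∈ diagLevelSet w t r) : t ≤ (∑ i, |w i|) * ‖x‖ ^ 2 := by
  rw [← hx.2, Finset.sum_mul]
  refine Finset.sum_le_sum fun i _ ↦ ?_
  rw [← sq_abs (x i)]
  gcongr
  · exact le_abs_self _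
  · exact PiLp.norm_apply_le x i

lemma inv_norm_mem_Icc_of_mem_diagLevelSet (ht : 0 < t) {x : EuclideanSpace ℝ ι}
    (hx : x ∈ diagLevelSet w t r) : ‖x‖⁻¹ ∈ Icc r⁻¹ √((∑ i, |w i|) / t) := by
  have hle := le_sum_abs_mul_norm_sq_of_mem_diagLevelSet hx
  have hpos : 0 < ‖x‖ := by
    by_contra! h
    rw [h.antisymm (norm_nonneg x)] at hle
    linarith
  refine ⟨inv_anti₀ hpos hx.1, Real.le_sqrt_of_sq_le ?_⟩
  rw [inv_pow, le_div_iff₀ ht, inv_mul_le_iff₀ (by positivity), mul_comm]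
  exact hle

lemma ae_inv_norm_mem_Icc_restrict_diagLevelSet (μ : Measure (EuclideanSpace ℝ ι)) (ht : 0 < t) :
    ∀ᵐ x ∂μ.restrict (diagLevelSet w t r), ‖x‖⁻¹ ∈ Icc r⁻¹ √((∑ i, |w i|) / t) :=
  ae_restrict_of_forall_mem (isClosed_diagLevelSet w t r).measurableSet
    fun _ ↦ inv_norm_mem_Icc_of_mem_diagLevelSet ht

lemma hasWeakTypeBound_inv_norm_restrict_diagLevelSet {μ : Measure (EuclideanSpace ℝ ι)}
    {C : ℝ≥0∞} {d : ℝ}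
    (hμ : ∀ s, 0 ≤ s → μ (diagLevelSet w t s) ≤ C * ENNReal.ofReal (s ^ d)) (r : ℝ) :
    HasWeakTypeBound (fun x ↦ ‖x‖⁻¹) C d (μ.restrict (diagLevelSet w t r)) := by
  intro u hu
  rw [Measure.restrict_apply' (isClosed_diagLevelSet w t r).measurableSet, Real.rpow_neg hu.le,
    ← Real.inv_rpow hu.le]
  refine (measure_mono ?_).trans (hμ u⁻¹ (by positivity))
  rintro x ⟨hux, hx⟩
  exact ⟨le_inv_of_le_inv₀ hu hux, hx.2⟩

lemma coe_nnreal_mul_ofReal (C : ℝ≥0) (y : ℝ) :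
    (C : ℝ≥0∞) * ENNReal.ofReal y = ENNReal.ofReal (C * y) := by
  rw [ENNReal.ofReal_mul C.coe_nonneg, ENNReal.ofReal_coe_nnreal]

variable [Nonempty ι] {ρ p : ℝ}

lemma exists_lintegral_diagLevelSet_le_const (hw : ∀ i, w i ≠ 0) (hρ : 0 < ρ) (hp : 0 ≤ p)
    (hpd : p < (Fintype.card ι : ℝ) - 1) :
    ∃ A > (0 : ℝ), ∀ t > 0, ∫⁻ x in diagLevelSet w t ρ, ENNReal.ofReal (‖x‖⁻¹ ^ p)
      ∂μH[(Fintype.card ι : ℝ) - 1] ≤ ENNReal.ofReal A := by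
  obtain ⟨C, hCpos, hC⟩ := exists_hausdorffMeasure_diagLevelSet_le hw
  set d := (Fintype.card ι : ℝ) - 1
  have hd : 0 < d := hp.trans_lt hpd
  have : 0 < d - p := sub_pos.2 hpd
  refine ⟨C * (d / (d - p) * ρ⁻¹ ^ (p - d)), by positivity, fun t ht ↦ ?_⟩
  rw [← coe_nnreal_mul_ofReal]
  exact (hasWeakTypeBound_inv_norm_restrict_diagLevelSet (hC t) ρ).lintegral_rpow_le_of_lt
    (by fun_prop) (inv_pos.2 hρ)
    ((ae_inv_norm_mem_Icc_restrict_diagLevelSet _ ht).mono fun _ hx ↦ hx.1) hp hpd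

lemma one_add_mul_log_le_mul_log_one_div {d W t : ℝ} (hd : 0 ≤ d) (hW : 0 < W) (hρ : 0 < ρ)
    (ht : t ∈ Ioc (0 : ℝ) (1 / 2)) :
    1 + d * Real.log (√(W / t) / ρ⁻¹) ≤
      ((1 + d * |Real.log ρ + Real.log W / 2|) / Real.log 2 + d / 2) * Real.log (1 / t) := by
  have ht0 : 0 < t := ht.1
  have hlog2 : 0 < Real.log 2 := Real.log_pos one_lt_two
  have hlogt : Real.log 2 ≤ Real.log (1 / t) :=
    Real.log_le_log two_pos ((le_one_div two_pos ht0).2 ht.2)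
  have hexpand : Real.log (√(W / t) / ρ⁻¹) =
      Real.log ρ + Real.log W / 2 + Real.log (1 / t) / 2 := by
    rw [div_inv_eq_mul, Real.log_mul (by positivity) hρ.ne', Real.log_sqrt (by positivity),
      div_eq_mul_one_div W t, Real.log_mul hW.ne' (by positivity)]
    ring
  set c := Real.log ρ + Real.log W / 2
  calc 1 + d * Real.log (√(W / t) / ρ⁻¹) = 1 + d * c + d / 2 * Real.log (1 / t) := by
        rw [hexpand]; ring
    _ ≤ (1 + d * |c|) + d / 2 * Real.log (1 / t) := by gcongr; exact le_abs_self c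
    _ ≤ (1 + d * |c|) * (Real.log (1 / t) / Real.log 2) + d / 2 * Real.log (1 / t) := by
        gcongr
        exact le_mul_of_one_le_right (by positivity) ((one_le_div hlog2).2 hlogt)
    _ = ((1 + d * |c|) / Real.log 2 + d / 2) * Real.log (1 / t) := by ring

lemma sum_abs_pos (hw : ∀ i, w i ≠ 0) : 0 < ∑ i, |w i| :=
  Finset.sum_pos (fun i _ ↦ abs_pos.2 (hw i)) Finset.univ_nonempty

variable (ι) in
lemma card_sub_one_nonneg : (0 : ℝ) ≤ Fintype.card ι - 1 :=
  sub_nonneg.2 (Nat.one_le_cast.2 Fintype.card_pos)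

lemma exists_lintegral_diagLevelSet_le_log (hw : ∀ i, w i ≠ 0) (hρ : 0 < ρ) :
    ∃ A > (0 : ℝ), ∀ t ∈ Ioc (0 : ℝ) (1 / 2),
      ∫⁻ x in diagLevelSet w t ρ, ENNReal.ofReal (‖x‖⁻¹ ^ ((Fintype.card ι : ℝ) - 1))
        ∂μH[(Fintype.card ι : ℝ) - 1] ≤ ENNReal.ofReal (A * Real.log (1 / t)) := by
  obtain ⟨C, hCpos, hC⟩ := exists_hausdorffMeasure_diagLevelSet_le hw
  have hd := card_sub_one_nonneg ι
  set d := (Fintype.card ι : ℝ) - 1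
  set W := ∑ i, |w i|
  have hW : 0 < W := sum_abs_pos hw
  refine ⟨C * ((1 + d * |Real.log ρ + Real.log W / 2|) / Real.log 2 + d / 2), by positivity,
    fun t ht ↦ ?_⟩
  have hae := ae_inv_norm_mem_Icc_restrict_diagLevelSet (w := w) (r := ρ) μH[d] ht.1
  calc ∫⁻ x in diagLevelSet w t ρ, ENNReal.ofReal (‖x‖⁻¹ ^ d) ∂μH[d]
      ≤ C * ENNReal.ofReal (1 + d * Real.log (√(W / t) / ρ⁻¹)) :=
        (hasWeakTypeBound_inv_norm_restrict_diagLevelSet (hC t) ρ).lintegral_rpow_self_le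
          (by fun_prop) (inv_pos.2 hρ) (hae.mono fun _ hx ↦ hx.1) (hae.mono fun _ hx ↦ hx.2) hd
    _ ≤ _ := by
        rw [coe_nnreal_mul_ofReal, mul_assoc]
        gcongr
        exact one_add_mul_log_le_mul_log_one_div hd hW hρ ht

lemma exists_lintegral_diagLevelSet_le_rpow (hw : ∀ i, w i ≠ 0)
    (hdp : (Fintype.card ι : ℝ) - 1 < p) :
    ∃ A > (0 : ℝ), ∀ t > 0, ∀ ρ, ∫⁻ x in diagLevelSet w t ρ, ENNReal.ofReal (‖x‖⁻¹ ^ p)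
      ∂μH[(Fintype.card ι : ℝ) - 1] ≤
        ENNReal.ofReal (A * t ^ (-((1 + p - Fintype.card ι) / 2))) := by
  obtain ⟨C, hCpos, hC⟩ := exists_hausdorffMeasure_diagLevelSet_le hw
  have hp : 0 < p := (card_sub_one_nonneg ι).trans_lt hdp
  have hexp : 1 + p - Fintype.card ι = p - ((Fintype.card ι : ℝ) - 1) := by ring
  rw [hexp]
  set d := (Fintype.card ι : ℝ) - 1
  have : 0 < p - d := sub_pos.2 hdp
  set W := ∑ i, |w i|
  have hW : 0 < W := sum_abs_pos hw
  refine ⟨C * (p / (p - d) * W ^ ((p - d) / 2)), by positivity, fun t ht ρ ↦ ?_⟩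
  have hscale : √(W / t) ^ (p - d) = W ^ ((p - d) / 2) * t ^ (-((p - d) / 2)) := by
    rw [Real.sqrt_eq_rpow, ← Real.rpow_mul (by positivity), one_div_mul_eq_div,
      Real.div_rpow hW.le ht.le, Real.rpow_neg ht.le, div_eq_mul_inv]
  have hae := ae_inv_norm_mem_Icc_restrict_diagLevelSet (w := w) (r := ρ) μH[d] ht
  calc ∫⁻ x in diagLevelSet w t ρ, ENNReal.ofReal (‖x‖⁻¹ ^ p) ∂μH[d]
      ≤ C * ENNReal.ofReal (p / (p - d) * √(W / t) ^ (p - d)) :=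
        (hasWeakTypeBound_inv_norm_restrict_diagLevelSet (hC t) ρ).lintegral_rpow_le_of_gt
          (by fun_prop) (ae_of_all _ fun _ ↦ by positivity) (hae.mono fun _ hx ↦ hx.2)
          (Real.sqrt_nonneg _) hp hdp
    _ = _ := by rw [coe_nnreal_mul_ofReal, hscale, ← mul_assoc, ← mul_assoc, mul_assoc (C : ℝ)]

end LevelSetIntegral

theorem stmt7_general {ι : Type*} [Fintype ι] [Nonempty ι] {w : ι → ℝ} (hw : ∀ i, w i ≠ 0)
    {ρ : ℝ} (hρ : 0 < ρ) {p : ℝ} (hp : 0 ≤ p) :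
    ∃ A > (0 : ℝ), ∀ t : ℝ, t ∈ Ioc (0 : ℝ) (1 / 2 : ℝ) →
      (p < Fintype.card ι - 1 →
        ∫⁻ x in diagLevelSet w t ρ, ENNReal.ofReal (‖x‖⁻¹ ^ p) ∂μH[(Fintype.card ι : ℝ) - 1] ≤
          ENNReal.ofReal A) ∧
      (p = Fintype.card ι - 1 →
        ∫⁻ x in diagLevelSet w t ρ, ENNReal.ofReal (‖x‖⁻¹ ^ p) ∂μH[(Fintype.card ι : ℝ) - 1] ≤
          ENNReal.ofReal (A * Real.log (1 / t))) ∧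
      (Fintype.card ι - 1 < p →
        ∫⁻ x in diagLevelSet w t ρ, ENNReal.ofReal (‖x‖⁻¹ ^ p) ∂μH[(Fintype.card ι : ℝ) - 1] ≤
          ENNReal.ofReal (A * t ^ (-((1 + p - Fintype.card ι) / 2)))) := by
  rcases lt_trichotomy p (Fintype.card ι - 1) with hlt | rfl | hgt
  · obtain ⟨A, hA, h⟩ := exists_lintegral_diagLevelSet_le_const hw hρ hp hlt
    exact ⟨A, hA, fun t ht ↦
      ⟨fun _ ↦ h t ht.1, fun heq ↦ absurd heq hlt.ne, fun hgt ↦ absurd hgt hlt.not_gt⟩⟩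
  · obtain ⟨A, hA, h⟩ := exists_lintegral_diagLevelSet_le_log hw hρ
    exact ⟨A, hA, fun t ht ↦
      ⟨fun hlt ↦ absurd hlt (lt_irrefl _), fun _ ↦ h t ht, fun hgt ↦ absurd hgt (lt_irrefl _)⟩⟩
  · obtain ⟨A, hA, h⟩ := exists_lintegral_diagLevelSet_le_rpow hw hgt
    exact ⟨A, hA, fun t ht ↦
      ⟨fun hlt ↦ absurd hlt hgt.not_gt, fun heq ↦ absurd heq hgt.ne', fun _ ↦ h t ht.1 ρ⟩⟩

lemma quadMorseModel_eq_sum_mul_sq (np nm : ℕ) (x : EuclideanSpace ℝ (Fin np ⊕ Fin nm)) :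
    quadMorseModel np nm x =
      ∑ i, Sum.elim (fun _ ↦ (1 : ℝ)) (fun _ ↦ -1) i * x i ^ 2 := by
  simp [quadMorseModel, Fintype.sum_sum_type, sub_eq_add_neg]

/-- Integration along the level sets of the quadratic Morse model:
for `m = np + nm ≥ 2`, `ρ > 0` and `k ∈ ℕ` there is `A > 0` such that, for every
`t ∈ (0, 1/2]`, the integral of `‖x‖^{-k}` over `{‖x‖ ≤ ρ, T x = t}` with respect to
`ℋ^{m-1}` is at most `A` if `k ≤ m − 2`, at most `A log(1/t)` if `k = m − 1`, and
at most `A t^{−(1+k−m)/2}` if `k ≥ m`. -/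
theorem stmt7 (m np nm : ℕ) (hm : 2 ≤ m) (hsum : np + nm = m)
    (ρ : ℝ) (hρ : 0 < ρ) (k : ℕ) :
    ∃ A > (0 : ℝ), ∀ t : ℝ, t ∈ Set.Ioc (0 : ℝ) (1 / 2 : ℝ) →
      (k ≤ m - 2 →
        ∫⁻ x in {x : EuclideanSpace ℝ (Fin np ⊕ Fin nm) |
            ‖x‖ ≤ ρ ∧ quadMorseModel np nm x = t},
          ENNReal.ofReal (‖x‖⁻¹ ^ k) ∂μH[(m : ℝ) - 1] ≤ ENNReal.ofReal A) ∧
      (k = m - 1 →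
        ∫⁻ x in {x : EuclideanSpace ℝ (Fin np ⊕ Fin nm) |
            ‖x‖ ≤ ρ ∧ quadMorseModel np nm x = t},
          ENNReal.ofReal (‖x‖⁻¹ ^ k) ∂μH[(m : ℝ) - 1] ≤
          ENNReal.ofReal (A * Real.log (1 / t))) ∧
      (m ≤ k →
        ∫⁻ x in {x : EuclideanSpace ℝ (Fin np ⊕ Fin nm) |
            ‖x‖ ≤ ρ ∧ quadMorseModel np nm x = t},
          ENNReal.ofReal (‖x‖⁻¹ ^ k) ∂μH[(m : ℝ) - 1] ≤
          ENNReal.ofReal (A * t ^ (-((1 + (k : ℝ) - (m : ℝ)) / 2)))) := by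
  have hcard : (Fintype.card (Fin np ⊕ Fin nm) : ℝ) = m := by simp [← hsum]
  have : Nonempty (Fin np ⊕ Fin nm) := Fintype.card_pos_iff.1 <| by
    simp only [Fintype.card_sum, Fintype.card_fin]; omega
  have hw : ∀ i : Fin np ⊕ Fin nm, Sum.elim (fun _ ↦ (1 : ℝ)) (fun _ ↦ -1) i ≠ 0 := by simp
  obtain ⟨A, hA, h⟩ := stmt7_general hw hρ (Nat.cast_nonneg k)
  simp only [hcard, diagLevelSet, ← quadMorseModel_eq_sum_mul_sq, Real.rpow_natCast] at h
  refine ⟨A, hA, fun t ht ↦ ⟨fun hk ↦ (h t ht).1 ?_, fun hk ↦ (h t ht).2.1 ?_,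
    fun hk ↦ (h t ht).2.2 ?_⟩⟩ <;> rify [hm, one_le_two.trans hm] at hk <;> linarith
end

section
/- Let m ≥ 2 and let T : ℝ^m → ℝ be of class C². Let ε > 0 and assume that T⁻¹([−ε, ε]) is compact, that every critical point p of T with T(p) ∈ [−ε, ε] is nondegenerate, and that 0 is the only critical value of T in [−ε, ε]. Define φ(t) = ℋ^{m−1}(T⁻¹(t)). Then φ is differentiable at every t ∈ (−ε, ε) with t ≠ 0, and there exist C > 0 and ε' ∈ (0, ε) such that for all t ∈ (−ε', ε') with t ≠ 0: |φ'(t)| ≤ C if m ≥ 4; |φ'(t)| ≤ C·log(1/|t|) if m = 3; and |φ'(t)| ≤ C·|t|^{−1/2} if m = 2. -/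
open MeasureTheory

/-!
At a regular value `t`, applying the divergence theorem to the normalized gradient
`X = ∇ T / ‖∇ T‖`, in charts that present the level sets as graphs, gives
`φ'(t) = ∫ div X / ‖∇ T‖` over `{T = t}`, hence `|φ'(t)| ≲ ∫ ‖∇ T‖⁻²`. Near a nondegenerate
critical point `p` with `T p = 0` one has `‖x - p‖ ≲ ‖∇ T x‖` and `|T x| ≲ ‖∇ T x‖ ^ 2`. By the
first bound, `{T = t}` meets the shell where `‖∇ T‖` is comparable to `l` in a set of
`(m - 1)`-dimensional measure `≲ l ^ (m - 1)`; by the second, only the scales `l ≳ |t| ^ (1 / 2)`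
occur. Summing `l ^ (m - 1) * l⁻²` over dyadic `l` yields the three bounds.
-/

open Module Set Filter Topology
open scoped NNReal ENNReal RealInnerProductSpace Gradient

section AreaFormula

theorem hausdorffMeasure_image_le_of_dist_le {α X Y : Type*} [MetricSpace X]
    [MeasurableSpace X] [BorelSpace X] [MetricSpace Y] [MeasurableSpace Y] [BorelSpace Y]
    {f : α → Y} {g : α → X} {A : Set α} {K : ℝ≥0}
    (h : ∀ x ∈ A, ∀ y ∈ A, dist (f x) (f y) ≤ K * dist (g x) (g y)) {d : ℝ} (hd : 0 ≤ d) :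
    μH[d] (f '' A) ≤ (K : ℝ≥0∞) ^ d * μH[d] (g '' A) := by
  rcases A.eq_empty_or_nonempty with rfl | ⟨a, -⟩
  · simp
  have : Nonempty α := ⟨a⟩
  have preimage_spec (p : X) (hp : p ∈ g '' A) := Function.invFunOn_pos hp
  have lipschitz : LipschitzOnWith K (f ∘ Function.invFunOn g A) (g '' A) := by
    refine LipschitzOnWith.of_dist_le_mul fun p hp q hq => ?_
    simpa only [Function.comp_apply, (preimage_spec p hp).2, (preimage_spec q hq).2]
      using h _ (preimage_spec p hp).1 _ (preimage_spec q hq).1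
  refine le_trans (measure_mono ?_) (lipschitz.hausdorffMeasure_image_le hd)
  rintro _ ⟨x, hx, rfl⟩
  obtain ⟨hmem, heq⟩ := preimage_spec (g x) (mem_image_of_mem g hx)
  refine ⟨g x, mem_image_of_mem g hx, dist_le_zero.1 ?_⟩
  simpa only [Function.comp_apply, heq, dist_self, mul_zero] using h _ hmem _ hx

variable {W E : Type*} [NormedAddCommGroup W] [NormedAddCommGroup E]

theorem exists_nhds_dist_le_mul_of_injective [NormedSpace ℝ W] [FiniteDimensional ℝ W]
    [NormedSpace ℝ E] {f : W → E} {L : W →L[ℝ] E} {y : W}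
    (hf : HasStrictFDerivAt f L y) (hL : Function.Injective L) {K : ℝ≥0} (hK : 1 < K) :
    ∃ U ∈ 𝓝 y, ∀ a ∈ U, ∀ b ∈ U,
      dist (f a) (f b) ≤ K * dist (L a) (L b) ∧ dist (L a) (L b) ≤ K * dist (f a) (f b) := by
  obtain ⟨c, hc, hLc⟩ := (L : W →ₗ[ℝ] E).exists_antilipschitzWith (LinearMap.ker_eq_bot.2 hL)
  have : 0 < K := zero_lt_one.trans hK
  have hδ : 0 < 1 - K⁻¹ := tsub_pos_of_lt (inv_lt_one_of_one_lt₀ hK)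
  obtain ⟨U, hU, happrox⟩ := hf.approximates_deriv_on_nhds (Or.inr (div_pos hδ hc))
  refine ⟨U, hU, fun a ha b hb => ?_⟩
  simp only [dist_eq_norm, ← map_sub]
  have : (1 : ℝ) < K := mod_cast hK
  have error_le : ‖f a - f b - L (a - b)‖ ≤ (1 - (K : ℝ)⁻¹) * ‖L (a - b)‖ := by
    have hab : ‖a - b‖ ≤ c * ‖L (a - b)‖ := by
      simpa [dist_eq_norm] using hLc.le_mul_dist (a - b) 0
    calc ‖f a - f b - L (a - b)‖ ≤ ((1 - K⁻¹) / c : ℝ≥0) * ‖a - b‖ := happrox _ ha _ hb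
      _ ≤ ((1 - K⁻¹) / c : ℝ≥0) * (c * ‖L (a - b)‖) := by gcongr
      _ = (1 - (K : ℝ)⁻¹) * ‖L (a - b)‖ := by
        rw [NNReal.coe_div, NNReal.coe_sub (inv_lt_one_of_one_lt₀ hK).le, ← mul_assoc,
          div_mul_cancel₀ _ (by positivity)]
        simp
  have hinv : (K : ℝ) * (K : ℝ)⁻¹ = 1 := mul_inv_cancel₀ (by positivity)
  constructor
  · have := norm_sub_norm_le (f a - f b) (L (a - b))
    have : 2 - (K : ℝ)⁻¹ ≤ K := by nlinarith [sq_nonneg ((K : ℝ) - 1)]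
    nlinarith [norm_nonneg (L (a - b))]
  · have := norm_sub_norm_le (L (a - b)) (f a - f b)
    rw [norm_sub_rev (L (a - b))] at this
    have : (K : ℝ)⁻¹ * ‖L (a - b)‖ ≤ ‖f a - f b‖ := by linarith
    rwa [inv_mul_le_iff₀ (by positivity)] at this

variable [InnerProductSpace ℝ W] [FiniteDimensional ℝ W] [InnerProductSpace ℝ E]

theorem continuous_normDet [CompleteSpace E] :
    Continuous fun L : W →L[ℝ] E => (L : W →ₗ[ℝ] E).normDet := by
  have : CompleteSpace W := FiniteDimensional.complete ℝ W
  have normDet_eq (L : W →L[ℝ] E) : (L : W →ₗ[ℝ] E).normDet = √(L.adjoint ∘L L).det := by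
    rw [← L.normDet_sq, RCLike.ofReal_real_eq_id, id_eq,
      Real.sqrt_sq (LinearMap.normDet_nonneg _)]
  simp only [normDet_eq]
  refine Real.continuous_sqrt.comp (ContinuousLinearMap.continuous_det.comp ?_)
  exact (ContinuousLinearMap.adjoint.continuous).clm_comp continuous_id

theorem normDet_pos_of_injective {L : W →L[ℝ] E} (hL : Function.Injective L) :
    0 < (L : W →ₗ[ℝ] E).normDet :=
  (LinearMap.normDet_nonneg _).lt_of_ne'
    ((L : W →ₗ[ℝ] E).normDet_ne_zero_tfae.out 0 4 |>.2 hL)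

variable [MeasurableSpace W] [BorelSpace W] [MeasurableSpace E] [BorelSpace E]

theorem lintegral_le_mul_and_mul_le_lintegral {α : Type*} [MeasurableSpace α] {μ : Measure α}
    {J : α → ℝ} {B : Set α} (hB : MeasurableSet B) {c : ℝ} {K : ℝ≥0}
    (hle : ∀ z ∈ B, J z ≤ K * c) (hge : ∀ z ∈ B, c ≤ K * J z) :
    ∫⁻ z in B, ENNReal.ofReal (J z) ∂μ ≤ K * (ENNReal.ofReal c * μ B) ∧
      ENNReal.ofReal c * μ B ≤ K * ∫⁻ z in B, ENNReal.ofReal (J z) ∂μ := by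
  have ofReal_K_mul (r : ℝ) : ENNReal.ofReal (K * r) = K * ENNReal.ofReal r := by
    rw [ENNReal.ofReal_mul K.coe_nonneg, ENNReal.ofReal_coe_nnreal]
  constructor
  · calc ∫⁻ z in B, ENNReal.ofReal (J z) ∂μ ≤ ∫⁻ _ in B, ENNReal.ofReal (K * c) ∂μ :=
        setLIntegral_mono' hB fun z hz => ENNReal.ofReal_le_ofReal (hle z hz)
      _ = K * (ENNReal.ofReal c * μ B) := by rw [setLIntegral_const, ofReal_K_mul, mul_assoc]
  · calc ENNReal.ofReal c * μ B = ∫⁻ _ in B, ENNReal.ofReal c ∂μ := (setLIntegral_const _ _).symm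
      _ ≤ ∫⁻ z in B, K * ENNReal.ofReal (J z) ∂μ := setLIntegral_mono' hB fun z hz => by
          rw [← ofReal_K_mul]
          exact ENNReal.ofReal_le_ofReal (hge z hz)
      _ = K * ∫⁻ z in B, ENNReal.ofReal (J z) ∂μ :=
          lintegral_const_mul' _ _ ENNReal.coe_ne_top

variable {f : W → E} {Y A : Set W}

theorem exists_isOpen_hausdorffMeasure_image_approx [CompleteSpace E] (hf : ContDiffOn ℝ 1 f Y)
    (hY : IsOpen Y) {y : W} (hy : y ∈ Y) (hL : Function.Injective (fderiv ℝ f y))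
    {K : ℝ≥0} (hK : 1 < K) :
    ∃ U, IsOpen U ∧ y ∈ U ∧ ∀ B ⊆ U, MeasurableSet B →
      μH[finrank ℝ W] (f '' B) ≤ K ^ (finrank ℝ W + 1) *
        ∫⁻ z in B, ENNReal.ofReal (fderiv ℝ f z : W →ₗ[ℝ] E).normDet ∂μH[finrank ℝ W] ∧
      ∫⁻ z in B, ENNReal.ofReal (fderiv ℝ f z : W →ₗ[ℝ] E).normDet ∂μH[finrank ℝ W] ≤
        K ^ (finrank ℝ W + 1) * μH[finrank ℝ W] (f '' B) := by
  set J : W → ℝ := fun z => (fderiv ℝ f z : W →ₗ[ℝ] E).normDet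
  have hf_at : ContDiffAt ℝ 1 f y := hf.contDiffAt (hY.mem_nhds hy)
  obtain ⟨V, hV, hbilip⟩ :=
    exists_nhds_dist_le_mul_of_injective (hf_at.hasStrictFDerivAt one_ne_zero) hL hK
  have hJ : ContinuousAt J y := continuous_normDet.continuousAt.comp
    (hf_at.continuousAt_fderiv one_ne_zero)
  have hJy : 0 < J y := normDet_pos_of_injective hL
  have : (1 : ℝ) < K := mod_cast hK
  have hupper : ∀ᶠ z in 𝓝 y, J z ≤ K * J y :=
    (hJ.eventually (gt_mem_nhds (by nlinarith))).mono fun _ => le_of_lt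
  have hlower : ∀ᶠ z in 𝓝 y, J y ≤ K * J z :=
    ((hJ.const_mul (K : ℝ)).eventually (lt_mem_nhds (by nlinarith))).mono fun _ => le_of_lt
  obtain ⟨U, hU, hUopen, hyU⟩ := mem_nhds_iff.1 (inter_mem hV (hupper.and hlower))
  refine ⟨U, hUopen, hyU, fun B hBU hB => ?_⟩
  have himage : μH[finrank ℝ W] (fderiv ℝ f y '' B) = ENNReal.ofReal (J y) * μH[finrank ℝ W] B :=
    (fderiv ℝ f y : W →ₗ[ℝ] E).hausdorffMeasure_image B
  obtain ⟨int_le, le_int⟩ := lintegral_le_mul_and_mul_le_lintegral (μ := μH[finrank ℝ W]) hB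
    (fun z hz => (hU (hBU hz)).2.1) (fun z hz => (hU (hBU hz)).2.2)
  have image_le := hausdorffMeasure_image_le_of_dist_le
    (fun a ha b hb => (hbilip a (hU (hBU ha)).1 b (hU (hBU hb)).1).1)
    (Nat.cast_nonneg (α := ℝ) (finrank ℝ W))
  have le_image := hausdorffMeasure_image_le_of_dist_le
    (fun a ha b hb => (hbilip a (hU (hBU ha)).1 b (hU (hBU hb)).1).2)
    (Nat.cast_nonneg (α := ℝ) (finrank ℝ W))
  rw [himage, ENNReal.rpow_natCast] at image_le le_image
  constructor
  · rw [pow_succ, mul_assoc]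
    exact image_le.trans (by gcongr)
  · rw [pow_succ', mul_assoc]
    exact int_le.trans (by gcongr)

theorem exists_measurable_partition {X : Type*} [TopologicalSpace X] [SecondCountableTopology X]
    [MeasurableSpace X] [BorelSpace X] {A : Set X} (hA : MeasurableSet A) {p : Set X → Prop}
    (hp : ∀ x ∈ A, ∃ U, IsOpen U ∧ x ∈ U ∧ ∀ B ⊆ U, MeasurableSet B → p B) (hempty : p ∅) :
    ∃ B : ℕ → Set X, (∀ n, MeasurableSet (B n)) ∧ Pairwise (Function.onFun Disjoint B) ∧
      ⋃ n, B n = A ∧ ∀ n, p (B n) := by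
  choose! U hUopen hxU hpU using hp
  obtain ⟨t, htA, htc, hcover⟩ := TopologicalSpace.countable_cover_nhdsWithin
    (fun x hx => mem_nhdsWithin_of_mem_nhds ((hUopen x hx).mem_nhds (hxU x hx)))
  rcases t.eq_empty_or_nonempty with rfl | hne
  · refine ⟨fun _ => ∅, by simp, fun _ _ _ => by simp, ?_, fun _ => hempty⟩
    simpa [eq_comm] using hcover
  obtain ⟨x, rfl⟩ := htc.exists_eq_range hne
  have hxA (n : ℕ) : x n ∈ A := htA (mem_range_self n)
  have hmeas (n : ℕ) : MeasurableSet (A ∩ disjointed (fun n => U (x n)) n) :=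
    hA.inter (MeasurableSet.disjointed (fun n => (hUopen _ (hxA n)).measurableSet) n)
  refine ⟨fun n => A ∩ disjointed (fun n => U (x n)) n, hmeas, fun i j hij => ?_, ?_,
    fun n => ?_⟩
  · exact (disjoint_disjointed _ hij).mono inter_subset_right inter_subset_right
  · rw [← inter_iUnion, iUnion_disjointed, inter_eq_left]
    simpa using hcover
  · exact hpU _ (hxA n) _ (inter_subset_right.trans (disjointed_subset _ n)) (hmeas n)

theorem hausdorffMeasure_image_approx [CompleteSpace E] (hf : ContDiffOn ℝ 1 f Y)
    (hY : IsOpen Y) (hinj : InjOn f Y) (hL : ∀ y ∈ Y, Function.Injective (fderiv ℝ f y))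
    (hA : MeasurableSet A) (hAY : A ⊆ Y) {K : ℝ≥0} (hK : 1 < K) :
    μH[finrank ℝ W] (f '' A) ≤ K ^ (finrank ℝ W + 1) *
        ∫⁻ z in A, ENNReal.ofReal (fderiv ℝ f z : W →ₗ[ℝ] E).normDet ∂μH[finrank ℝ W] ∧
      ∫⁻ z in A, ENNReal.ofReal (fderiv ℝ f z : W →ₗ[ℝ] E).normDet ∂μH[finrank ℝ W] ≤
        K ^ (finrank ℝ W + 1) * μH[finrank ℝ W] (f '' A) := by
  obtain ⟨B, hB, hdisj, rfl, happrox⟩ := exists_measurable_partition hA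
    (fun y hy => exists_isOpen_hausdorffMeasure_image_approx hf hY (hAY hy) (hL y (hAY hy)) hK)
    (by simp)
  have hBY (n : ℕ) : B n ⊆ Y := (subset_iUnion B n).trans hAY
  have himage : μH[finrank ℝ W] (f '' ⋃ n, B n) = ∑' n, μH[finrank ℝ W] (f '' B n) := by
    rw [image_iUnion]
    exact measure_iUnion (fun i j hij => (hdisj hij).image hinj (hBY i) (hBY j)) fun n =>
      (hB n).image_of_continuousOn_injOn (hf.continuousOn.mono (hBY n)) (hinj.mono (hBY n))
  rw [himage, lintegral_iUnion hB hdisj, ← ENNReal.tsum_mul_left, ← ENNReal.tsum_mul_left]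
  exact ⟨ENNReal.tsum_le_tsum fun n => (happrox n).1, ENNReal.tsum_le_tsum fun n => (happrox n).2⟩

theorem hausdorffMeasure_image_eq_lintegral_normDet [CompleteSpace E] (hf : ContDiffOn ℝ 1 f Y)
    (hY : IsOpen Y) (hinj : InjOn f Y) (hL : ∀ y ∈ Y, Function.Injective (fderiv ℝ f y))
    (hA : MeasurableSet A) (hAY : A ⊆ Y) :
    μH[finrank ℝ W] (f '' A) =
      ∫⁻ z in A, ENNReal.ofReal (fderiv ℝ f z : W →ₗ[ℝ] E).normDet ∂μH[finrank ℝ W] := by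
  have tendsto_pow_mul (b : ℝ≥0∞) :
      Tendsto (fun K : ℝ≥0 => (K : ℝ≥0∞) ^ (finrank ℝ W + 1) * b) (𝓝[>] 1) (𝓝 b) := by
    have hcont : Continuous fun K : ℝ≥0 => ((K ^ (finrank ℝ W + 1) : ℝ≥0) : ℝ≥0∞) := by fun_prop
    have hlim := (hcont.tendsto 1).mono_left (nhdsWithin_le_nhds (s := Ioi 1))
    simp only [one_pow, ENNReal.coe_one, ENNReal.coe_pow] at hlim
    simpa using ENNReal.Tendsto.mul_const hlim (Or.inl one_ne_zero)
  have approx {K : ℝ≥0} (hK : 1 < K) := hausdorffMeasure_image_approx hf hY hinj hL hA hAY hK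
  exact le_antisymm
    (ge_of_tendsto (tendsto_pow_mul _) (eventually_mem_nhdsWithin.mono fun K hK => (approx hK).1))
    (ge_of_tendsto (tendsto_pow_mul _) (eventually_mem_nhdsWithin.mono fun K hK => (approx hK).2))

theorem restrict_image_eq_map_withDensity_normDet [CompleteSpace E] (hf : ContDiffOn ℝ 1 f Y)
    (hY : IsOpen Y) (hinj : InjOn f Y) (hL : ∀ y ∈ Y, Function.Injective (fderiv ℝ f y)) :
    (μH[finrank ℝ W] : Measure E).restrict (f '' Y) =
      (((μH[finrank ℝ W] : Measure W).restrict Y).withDensity fun y =>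
        ENNReal.ofReal (fderiv ℝ f y : W →ₗ[ℝ] E).normDet).map f := by
  have hae : AEMeasurable f ((μH[finrank ℝ W] : Measure W).restrict Y) :=
    hf.continuousOn.aemeasurable hY.measurableSet
  ext B hB
  have hpre : MeasurableSet (f ⁻¹' B ∩ Y) := by
    rw [inter_comm, ← Subtype.image_preimage_coe]
    exact hY.measurableSet.subtype_image
      (continuousOn_iff_continuous_domRestrict.1 hf.continuousOn |>.measurable hB)
  rw [Measure.map_apply_of_aemeasurable (hae.mono_ac (withDensity_absolutelyContinuous _ _)) hB,
    Measure.restrict_apply hB, withDensity_apply', Measure.restrict_restrict' hY.measurableSet,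
    ← hausdorffMeasure_image_eq_lintegral_normDet hf hY hinj hL hpre inter_subset_right,
    image_preimage_inter]

theorem setIntegral_image_eq_setIntegral_normDet_smul [CompleteSpace E] (hf : ContDiffOn ℝ 1 f Y)
    (hY : IsOpen Y) (hinj : InjOn f Y) (hL : ∀ y ∈ Y, Function.Injective (fderiv ℝ f y))
    {F : Type*} [NormedAddCommGroup F] [NormedSpace ℝ F] {g : E → F} (hg : StronglyMeasurable g) :
    ∫ x in f '' Y, g x ∂μH[finrank ℝ W] =
      ∫ y in Y, (fderiv ℝ f y : W →ₗ[ℝ] E).normDet • g (f y) ∂μH[finrank ℝ W] := by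
  have hae : AEMeasurable f ((μH[finrank ℝ W] : Measure W).restrict Y) :=
    hf.continuousOn.aemeasurable hY.measurableSet
  have hJ : ContinuousOn (fun y => (fderiv ℝ f y : W →ₗ[ℝ] E).normDet) Y :=
    continuous_normDet.comp_continuousOn (hf.continuousOn_fderiv_of_isOpen hY le_rfl)
  rw [restrict_image_eq_map_withDensity_normDet hf hY hinj hL,
    integral_map (hae.mono_ac (withDensity_absolutelyContinuous _ _)) hg.aestronglyMeasurable,
    integral_withDensity_eq_integral_toReal_smul₀
      (hJ.aemeasurable hY.measurableSet).ennreal_ofReal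
      (ae_of_all _ fun _ => ENNReal.ofReal_lt_top)]
  simp only [ENNReal.toReal_ofReal (LinearMap.normDet_nonneg _)]

end AreaFormula

section GraphChart

theorem normDet_eq_sqrt_of_inner_map_eq {W E : Type*} [NormedAddCommGroup W]
    [InnerProductSpace ℝ W] [FiniteDimensional ℝ W] [NormedAddCommGroup E] [InnerProductSpace ℝ E]
    [FiniteDimensional ℝ E] {L : W →ₗ[ℝ] E} {a : W}
    (hL : ∀ u w, ⟪L u, L w⟫ = ⟪u, w⟫ + ⟪a, u⟫ * ⟪a, w⟫) : L.normDet = √(1 + ‖a‖ ^ 2) := by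
  have hgram : L.adjoint ∘ₗ L = LinearMap.transvection (innerₛₗ ℝ a) a := by
    ext u
    refine ext_inner_right ℝ fun w => ?_
    simp [LinearMap.adjoint_inner_left, hL, LinearMap.transvection.apply, inner_add_left,
      inner_smul_left]
  have hsq : L.normDet ^ 2 = 1 + ‖a‖ ^ 2 := by
    have := L.normDet_sq
    rwa [hgram, LinearMap.transvection.det, innerₛₗ_apply_apply, real_inner_self_eq_norm_sq] at this
  rw [← hsq, Real.sqrt_sq L.normDet_nonneg]

variable {E : Type*} [NormedAddCommGroup E] [InnerProductSpace ℝ E]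

theorem orthogonalProjection_add_smul_eq_self (v x : E) :
    ((ℝ ∙ v)ᗮ.orthogonalProjectionOnto x : E) + (⟪v, x⟫ / ‖v‖ ^ 2) • v = x := by
  have h := (ℝ ∙ v).starProjection_add_starProjection_orthogonal x
  rw [Submodule.starProjection_singleton, add_comm] at h
  exact h

theorem norm_sq_mul_norm_sq_eq_orthogonalProjection (g v : E) :
    ‖g‖ ^ 2 * ‖v‖ ^ 2 =
      ‖(ℝ ∙ v)ᗮ.orthogonalProjectionOnto g‖ ^ 2 * ‖v‖ ^ 2 + ⟪g, v⟫ ^ 2 := by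
  rcases eq_or_ne v 0 with rfl | hv
  · simp
  have hnorm := Submodule.norm_sq_eq_add_norm_sq_starProjection g (ℝ ∙ v)
  rw [Submodule.starProjection_singleton, norm_smul, Real.norm_eq_abs, mul_pow, sq_abs,
    real_inner_comm] at hnorm
  have hv' : ‖v‖ ≠ 0 := norm_ne_zero_iff.2 hv
  rw [hnorm]
  simp only [RCLike.ofReal_real_eq_id, id_eq]
  field_simp
  rw [add_comm]
  rfl

/-- The derivative `x ↦ (projection of x to vᗮ, ⟪g, x⟫)` of a graph chart at a point where `T` has
gradient `g`, as a linear equivalence. -/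
noncomputable def graphChartDeriv (g v : E) (hg : ⟪g, v⟫ ≠ 0) : E ≃L[ℝ] (ℝ ∙ v)ᗮ × ℝ :=
  ContinuousLinearEquiv.equivOfInverse
    ((ℝ ∙ v)ᗮ.orthogonalProjectionOnto.prod (innerSL ℝ g))
    ((ℝ ∙ v)ᗮ.subtypeL ∘L .fst ℝ _ ℝ + (⟪g, v⟫⁻¹ •
      (.snd ℝ _ ℝ - innerSL ℝ g ∘L (ℝ ∙ v)ᗮ.subtypeL ∘L .fst ℝ _ ℝ)).smulRight v)
    (fun x => by
      have hx := orthogonalProjection_add_smul_eq_self v x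
      set p := (ℝ ∙ v)ᗮ.orthogonalProjectionOnto x with hp
      have hgx : ⟪g, x⟫ - ⟪g, (p : E)⟫ = ⟪g, v⟫ * (⟪v, x⟫ / ‖v‖ ^ 2) := by
        rw [← inner_sub_right, ← eq_sub_of_add_eq' hx, real_inner_smul_right, mul_comm]
      simp [-Submodule.coe_orthogonalProjectionOnto_apply, ← hp, hgx, hg, hx])
    (fun z => by
      have hv : (ℝ ∙ v)ᗮ.orthogonalProjectionOnto v = 0 :=
        Submodule.orthogonalProjectionOnto_orthogonalComplement_singleton_eq_zero v
      refine Prod.ext ?_ ?_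
      · change (ℝ ∙ v)ᗮ.orthogonalProjectionOnto (z.1 + (_ : ℝ) • v) = z.1
        rw [map_add, map_smul, hv, smul_zero, add_zero,
          Submodule.orthogonalProjectionOnto_mem_subspace_eq_self]
      · change ⟪g, z.1 + (⟪g, v⟫⁻¹ * (z.2 - ⟪g, (z.1 : E)⟫)) • v⟫ = z.2
        rw [inner_add_right, real_inner_smul_right]
        field_simp
        ring)

theorem graphChartDeriv_symm_apply {g v : E} (hg : ⟪g, v⟫ ≠ 0) (w : (ℝ ∙ v)ᗮ) (r : ℝ) :
    (graphChartDeriv g v hg).symm (w, r) = w + (⟪g, v⟫⁻¹ * (r - ⟪g, (w : E)⟫)) • v :=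
  rfl

theorem normDet_graphChartDeriv_symm_inl [FiniteDimensional ℝ E] {g v : E} (hg : 0 < ⟪g, v⟫) :
    (((graphChartDeriv g v hg.ne').symm : (ℝ ∙ v)ᗮ × ℝ →L[ℝ] E) ∘L
      .inl ℝ _ ℝ).toLinearMap.normDet = ‖g‖ * ‖v‖ / ⟪g, v⟫ := by
  set a : (ℝ ∙ v)ᗮ := (‖v‖ / ⟪g, v⟫) • (ℝ ∙ v)ᗮ.orthogonalProjectionOnto g
  have inner_a (w : (ℝ ∙ v)ᗮ) : ⟪a, w⟫ = ‖v‖ / ⟪g, v⟫ * ⟪g, (w : E)⟫ := by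
    rw [real_inner_smul_left, Submodule.inner_orthogonalProjectionOnto_eq_of_mem_right]
  have inner_v (w : (ℝ ∙ v)ᗮ) : ⟪v, (w : E)⟫ = 0 :=
    Submodule.mem_orthogonal_singleton_iff_inner_right.1 w.2
  rw [normDet_eq_sqrt_of_inner_map_eq (a := a)]
  · have hnorm := norm_sq_mul_norm_sq_eq_orthogonalProjection g v
    rw [Real.sqrt_eq_iff_mul_self_eq (by positivity) (by positivity)]
    simp only [a, norm_smul, norm_div, norm_norm, Real.norm_of_nonneg hg.le]
    field_simp
    linarith
  · intro u w
    simp only [ContinuousLinearMap.coe_coe, ContinuousLinearMap.comp_apply,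
      ContinuousLinearMap.inl_apply, ContinuousLinearEquiv.coe_coe, graphChartDeriv_symm_apply,
      inner_add_left, inner_add_right, real_inner_smul_left, real_inner_smul_right, inner_v,
      inner_a, real_inner_comm v, real_inner_self_eq_norm_sq, Submodule.coe_inner]
    ring

variable [FiniteDimensional ℝ E]

theorem continuous_gradient {T : E → ℝ} (hT : ContDiff ℝ 1 T) : Continuous (∇ T) :=
  (InnerProductSpace.toDual ℝ E).symm.continuous.comp (hT.continuous_fderiv one_ne_zero)

/-- `e` is given by the coordinates `x ↦ (projection of x to vᗮ, T x)`, on an open set where `T`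
increases in the direction `v`; it presents the level sets of `T` as graphs over `vᗮ`. -/
structure IsGraphChart (T : E → ℝ) (v : E) (e : OpenPartialHomeomorph E ((ℝ ∙ v)ᗮ × ℝ)) :
    Prop where
  coe_eq : ⇑e = fun x => ((ℝ ∙ v)ᗮ.orthogonalProjectionOnto x, T x)
  inner_gradient_pos : ∀ x ∈ e.source, 0 < ⟪∇ T x, v⟫

variable {T : E → ℝ} {v : E}

theorem hasStrictFDerivAt_graphCoordinates (hT : ContDiff ℝ 1 T) {x : E} (hx : ⟪∇ T x, v⟫ ≠ 0) :
    HasStrictFDerivAt (fun x => ((ℝ ∙ v)ᗮ.orthogonalProjectionOnto x, T x))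
      (graphChartDeriv (∇ T x) v hx : E →L[ℝ] (ℝ ∙ v)ᗮ × ℝ) x := by
  have hgrad : innerSL ℝ (∇ T x) = fderiv ℝ T x := by ext y; simp [inner_gradient_left]
  refine (ContinuousLinearMap.hasStrictFDerivAt _).prodMk ?_
  rw [hgrad]
  exact hT.contDiffAt.hasStrictFDerivAt one_ne_zero

theorem exists_isGraphChart (hT : ContDiff ℝ 1 T) {x : E} (hx : 0 < ⟪∇ T x, v⟫) :
    ∃ e, IsGraphChart T v e ∧ x ∈ e.source := by
  have hderiv := hasStrictFDerivAt_graphCoordinates hT hx.ne'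
  have hopen : IsOpen {y | 0 < ⟪∇ T y, v⟫} :=
    isOpen_lt continuous_const ((continuous_gradient hT).inner continuous_const)
  refine ⟨(hderiv.toOpenPartialHomeomorph _).restrOpen _ hopen, ⟨rfl, fun y hy => ?_⟩, ?_⟩
  · rw [OpenPartialHomeomorph.restrOpen_source] at hy
    exact hy.2
  · rw [OpenPartialHomeomorph.restrOpen_source]
    exact ⟨hderiv.mem_toOpenPartialHomeomorph_source, hx⟩

namespace IsGraphChart

variable {e : OpenPartialHomeomorph E ((ℝ ∙ v)ᗮ × ℝ)}

theorem hasStrictFDerivAt_symm (he : IsGraphChart T v e) (hT : ContDiff ℝ 1 T)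
    {z : (ℝ ∙ v)ᗮ × ℝ} (hz : z ∈ e.target) :
    HasStrictFDerivAt e.symm ((graphChartDeriv (∇ T (e.symm z)) v
      (he.inner_gradient_pos _ (e.map_target hz)).ne').symm : (ℝ ∙ v)ᗮ × ℝ →L[ℝ] E) z := by
  refine e.hasStrictFDerivAt_symm hz ?_
  rw [he.coe_eq]
  exact hasStrictFDerivAt_graphCoordinates hT _

theorem contDiffOn_symm (he : IsGraphChart T v e) (hT : ContDiff ℝ 1 T) :
    ContDiffOn ℝ 1 e.symm e.target := fun z hz => by
  have hderiv := hasStrictFDerivAt_graphCoordinates hT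
    (he.inner_gradient_pos _ (e.map_target hz)).ne'
  rw [← he.coe_eq] at hderiv
  refine (e.contDiffAt_symm hz hderiv.hasFDerivAt ?_).contDiffWithinAt
  rw [he.coe_eq]
  exact ((ContinuousLinearMap.contDiff _).prodMk hT).contDiffAt

omit [FiniteDimensional ℝ E] in
theorem isOpen_slice (e : OpenPartialHomeomorph E ((ℝ ∙ v)ᗮ × ℝ)) (s : ℝ) :
    IsOpen {y | (y, s) ∈ e.target} :=
  e.open_target.preimage (Continuous.prodMk_left s)

theorem image_slice (he : IsGraphChart T v e) (s : ℝ) :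
    (fun y => e.symm (y, s)) '' {y | (y, s) ∈ e.target} = T ⁻¹' {s} ∩ e.source := by
  have apply_eq (x : E) : e x = ((ℝ ∙ v)ᗮ.orthogonalProjectionOnto x, T x) := by rw [he.coe_eq]
  ext x
  constructor
  · rintro ⟨y, hy, rfl⟩
    have hright := e.right_inv hy
    rw [apply_eq] at hright
    exact ⟨congrArg Prod.snd hright, e.map_target hy⟩
  · rintro ⟨rfl, hx⟩
    refine ⟨(ℝ ∙ v)ᗮ.orthogonalProjectionOnto x, ?_, ?_⟩
    · simpa only [mem_ofPred_eq, ← apply_eq] using e.map_source hx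
    · simpa only [← apply_eq] using e.left_inv hx

theorem fderiv_symm_slice (he : IsGraphChart T v e) (hT : ContDiff ℝ 1 T) {y : (ℝ ∙ v)ᗮ} {s : ℝ}
    (hy : (y, s) ∈ e.target) :
    fderiv ℝ (fun y => e.symm (y, s)) y = ((graphChartDeriv (∇ T (e.symm (y, s))) v
      (he.inner_gradient_pos _ (e.map_target hy)).ne').symm : (ℝ ∙ v)ᗮ × ℝ →L[ℝ] E) ∘L
        .inl ℝ _ ℝ :=
  ((he.hasStrictFDerivAt_symm hT hy).hasFDerivAt.comp y (hasFDerivAt_prodMk_left y s)).fderiv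

theorem setIntegral_levelSet [MeasurableSpace E] [BorelSpace E] (he : IsGraphChart T v e)
    (hT : ContDiff ℝ 1 T) (s : ℝ) {f : E → ℝ} (hf : Measurable f) :
    ∫ x in T ⁻¹' {s} ∩ e.source, f x * (⟪∇ T x, v⟫ / ‖∇ T x‖) ∂μH[finrank ℝ (ℝ ∙ v)ᗮ] =
      ‖v‖ * ∫ y in {y | (y, s) ∈ e.target}, f (e.symm (y, s)) ∂μH[finrank ℝ (ℝ ∙ v)ᗮ] := by
  have hsmooth : ContDiffOn ℝ 1 (fun y => e.symm (y, s)) {y | (y, s) ∈ e.target} :=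
    (he.contDiffOn_symm hT).comp (contDiff_id.prodMk contDiff_const).contDiffOn fun _ hy => hy
  have hinj : InjOn (fun y => e.symm (y, s)) {y | (y, s) ∈ e.target} := fun y hy z hz h =>
    congrArg Prod.fst (e.symm.injOn hy hz h)
  have himmersion (y) (hy : (y, s) ∈ e.target) :
      Function.Injective (fderiv ℝ (fun y => e.symm (y, s)) y) := by
    rw [he.fderiv_symm_slice hT hy]
    exact (graphChartDeriv _ v (he.inner_gradient_pos _ (e.map_target hy)).ne').symm.injective.comp
      (Prod.mk_left_injective (0 : ℝ))
  have hmeas : Measurable fun x => f x * (⟪∇ T x, v⟫ / ‖∇ T x‖) := by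
    have := (continuous_gradient hT).measurable
    fun_prop
  rw [← he.image_slice s, setIntegral_image_eq_setIntegral_normDet_smul hsmooth (isOpen_slice e s)
    hinj himmersion hmeas.stronglyMeasurable, ← integral_const_mul]
  refine setIntegral_congr_fun (isOpen_slice e s).measurableSet fun y hy => ?_
  have hpos := he.inner_gradient_pos _ (e.map_target hy)
  have hne : ‖∇ T (e.symm (y, s))‖ ≠ 0 :=
    norm_ne_zero_iff.2 fun h => by simp [h] at hpos
  simp only [he.fderiv_symm_slice hT hy, normDet_graphChartDeriv_symm_inl hpos, smul_eq_mul]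
  field_simp

end IsGraphChart

end GraphChart

section DifferentiationUnderIntegral

theorem hasDerivAt_integral_of_contDiff_of_hasCompactSupport {W : Type*} [NormedAddCommGroup W]
    [NormedSpace ℝ W] [SecondCountableTopology W] [MeasurableSpace W] [BorelSpace W]
    {H : W × ℝ → ℝ} (hH : ContDiff ℝ 1 H) (hc : HasCompactSupport H) (μ : Measure W)
    [IsFiniteMeasureOnCompacts μ] (t : ℝ) :
    HasDerivAt (fun s => ∫ y, H (y, s) ∂μ) (∫ y, fderiv ℝ H (y, t) (0, 1) ∂μ) t := by
  have hderiv : Continuous fun z => fderiv ℝ H z (0, 1) :=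
    (hH.continuous_fderiv one_ne_zero).clm_apply continuous_const
  obtain ⟨C, hC⟩ := hderiv.bounded_above_of_compact_support (hc.fderiv_apply ℝ (0, 1))
  have hK : IsCompact (Prod.fst '' tsupport H) := hc.isCompact.image continuous_fst
  have notMem_tsupport {y : W} (hy : y ∉ Prod.fst '' tsupport H) (s : ℝ) : (y, s) ∉ tsupport H :=
    fun h => hy ⟨_, h, rfl⟩
  have hslice (s : ℝ) : Continuous fun y : W => (y, s) := .prodMk_left s
  refine (hasDerivAt_integral_of_dominated_loc_of_deriv_le (F := fun s y => H (y, s))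
    (F' := fun s y => fderiv ℝ H (y, s) (0, 1))
    (bound := (Prod.fst '' tsupport H).indicator fun _ => C) univ_mem ?_ ?_ ?_ ?_ ?_ ?_).2
  · exact .of_forall fun s => (hH.continuous.comp (hslice s)).aestronglyMeasurable
  · exact (hH.continuous.comp (hslice t)).integrable_of_hasCompactSupport
      (.intro hK fun y hy => image_eq_zero_of_notMem_tsupport (f := H) (notMem_tsupport hy t))
  · exact (hderiv.comp (hslice t)).aestronglyMeasurable
  · refine .of_forall fun y s _ => ?_
    by_cases hy : y ∈ Prod.fst '' tsupport H
    · rw [indicator_of_mem hy]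
      exact hC _
    · rw [indicator_of_notMem hy, fderiv_of_notMem_tsupport ℝ (notMem_tsupport hy s)]
      simp
  · exact (integrable_indicator_iff hK.measurableSet).2 (integrableOn_const hK.measure_lt_top.ne)
  · exact .of_forall fun y s _ => (hH.differentiable one_ne_zero (y, s)).hasFDerivAt.comp_hasDerivAt
      s ((hasDerivAt_const s y).prodMk (hasDerivAt_id s))

variable {E F : Type*} [NormedAddCommGroup E] [NormedAddCommGroup F]
  {e : OpenPartialHomeomorph E F} {ψ : E → ℝ}

theorem indicator_comp_symm_eq_zero {z : F} (hz : z ∉ e '' tsupport ψ) :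
    e.target.indicator (ψ ∘ e.symm) z = 0 := by
  refine indicator_apply_eq_zero.2 fun hmem => by_contra fun hne => hz ?_
  exact ⟨e.symm z, subset_tsupport _ hne, e.right_inv hmem⟩

theorem isCompact_image_tsupport (hc : HasCompactSupport ψ) (hψ : tsupport ψ ⊆ e.source) :
    IsCompact (e '' tsupport ψ) :=
  hc.isCompact.image_of_continuousOn (e.continuousOn.mono hψ)

theorem indicator_comp_symm_eventuallyEq {z : F} (hz : z ∈ e.target) :
    e.target.indicator (ψ ∘ e.symm) =ᶠ[𝓝 z] ψ ∘ e.symm := by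
  filter_upwards [e.open_target.mem_nhds hz] with w hw using indicator_of_mem hw _

theorem indicator_comp_symm_eventuallyEq_zero (hc : HasCompactSupport ψ)
    (hψ : tsupport ψ ⊆ e.source) {z : F} (hz : z ∉ e.target) :
    e.target.indicator (ψ ∘ e.symm) =ᶠ[𝓝 z] fun _ => 0 := by
  have hz' : z ∉ e '' tsupport ψ := fun ⟨x, hx, h⟩ => hz (h ▸ e.map_source (hψ hx))
  have hclosed := (isCompact_image_tsupport hc hψ).isClosed
  filter_upwards [hclosed.isOpen_compl.mem_nhds hz'] with w hw using indicator_comp_symm_eq_zero hw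

theorem contDiff_indicator_comp_symm [NormedSpace ℝ E] [NormedSpace ℝ F]
    (he : ContDiffOn ℝ 1 e.symm e.target) (hψ : ContDiff ℝ 1 ψ) (hc : HasCompactSupport ψ)
    (hsupp : tsupport ψ ⊆ e.source) : ContDiff ℝ 1 (e.target.indicator (ψ ∘ e.symm)) := by
  refine contDiff_iff_contDiffAt.2 fun z => ?_
  by_cases hz : z ∈ e.target
  · exact (hψ.contDiffAt.comp z (he.contDiffAt (e.open_target.mem_nhds hz))).congr_of_eventuallyEq
      (indicator_comp_symm_eventuallyEq hz)
  · exact contDiffAt_const.congr_of_eventuallyEq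
      (indicator_comp_symm_eventuallyEq_zero hc hsupp hz)

end DifferentiationUnderIntegral

section FluxDerivative

variable {E : Type*} [NormedAddCommGroup E] [InnerProductSpace ℝ E]

/-- The divergence of a vector field, as the trace of its derivative. -/
noncomputable def divergence (X : E → E) (x : E) : ℝ :=
  LinearMap.trace ℝ E (fderiv ℝ X x)

theorem divergence_add {X Y : E → E} {x : E} (hX : DifferentiableAt ℝ X x)
    (hY : DifferentiableAt ℝ Y x) : divergence (X + Y) x = divergence X x + divergence Y x := by
  rw [divergence, fderiv_add hX hY, ContinuousLinearMap.toLinearMap_add, map_add]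
  rfl

theorem divergence_eq_zero_of_notMem_tsupport {X : E → E} {x : E} (hx : x ∉ tsupport X) :
    divergence X x = 0 := by
  rw [divergence, fderiv_of_notMem_tsupport ℝ hx, ContinuousLinearMap.toLinearMap_zero, map_zero]

variable [FiniteDimensional ℝ E]

theorem divergence_smul_const {ψ : E → ℝ} {x : E} (hψ : DifferentiableAt ℝ ψ x) (v : E) :
    divergence (fun x => ψ x • v) x = fderiv ℝ ψ x v := by
  rw [divergence, fderiv_smul_const hψ v]
  exact LinearMap.trace_smulRight _ _

theorem continuous_divergence {X : E → E} (hX : ContDiff ℝ 1 X) : Continuous (divergence X) :=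
  (LinearMap.continuous_of_finiteDimensional (LinearMap.trace ℝ E ∘ₗ
    ContinuousLinearMap.coeLM ℝ)).comp (hX.continuous_fderiv one_ne_zero)

/-- The `C¹` compactly supported vector fields that vanish near the critical points of `T`. -/
structure IsRegularField (T : E → ℝ) (X : E → E) : Prop where
  contDiff : ContDiff ℝ 1 X
  hasCompactSupport : HasCompactSupport X
  gradient_ne_zero : ∀ x ∈ tsupport X, ∇ T x ≠ 0

namespace IsRegularField

variable {T : E → ℝ} {X Y : E → E}

theorem zero (T : E → ℝ) : IsRegularField T 0 :=
  ⟨contDiff_const, .zero, fun x hx => by simp [tsupport] at hx⟩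

theorem add (hX : IsRegularField T X) (hY : IsRegularField T Y) : IsRegularField T (X + Y) where
  contDiff := hX.contDiff.add hY.contDiff
  hasCompactSupport := hX.hasCompactSupport.add hY.hasCompactSupport
  gradient_ne_zero x hx :=
    (tsupport_add X Y hx).elim (hX.gradient_ne_zero x) (hY.gradient_ne_zero x)

theorem smul (hX : IsRegularField T X) {η : E → ℝ} (hη : ContDiff ℝ 1 η) :
    IsRegularField T (η • X) where
  contDiff := hη.smul hX.contDiff
  hasCompactSupport := hX.hasCompactSupport.smul_left
  gradient_ne_zero x hx := hX.gradient_ne_zero x (tsupport_smul_subset_right η X hx)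

theorem smul_const {ψ : E → ℝ} (hψ : ContDiff ℝ 1 ψ) (hc : HasCompactSupport ψ)
    (hne : ∀ x ∈ tsupport ψ, ∇ T x ≠ 0) (v : E) : IsRegularField T fun x => ψ x • v where
  contDiff := hψ.smul contDiff_const
  hasCompactSupport := hc.smul_right
  gradient_ne_zero x hx := hne x (tsupport_smul_subset_left ψ (fun _ => v) hx)

variable [MeasurableSpace E] [BorelSpace E] {μ : Measure E} {S : Set E}

theorem integrableOn_flux (hX : IsRegularField T X) (hT : ContDiff ℝ 1 T) (hS : μ S < ∞) :
    IntegrableOn (fun x => ⟪∇ T x, X x⟫ / ‖∇ T x‖) S μ := by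
  have hgrad := continuous_gradient hT
  obtain ⟨C, hC⟩ := hX.contDiff.continuous.bounded_above_of_compact_support hX.hasCompactSupport
  refine Measure.integrableOn_of_bounded (M := C) hS.ne
    ((hgrad.inner hX.contDiff.continuous).measurable.div
      hgrad.norm.measurable).aestronglyMeasurable (.of_forall fun x => ?_)
  rw [norm_div, norm_norm]
  refine (div_le_of_le_mul₀ (norm_nonneg _) (norm_nonneg _) ?_).trans (hC x)
  rw [mul_comm]
  exact norm_inner_le_norm _ _

theorem integrableOn_divergence (hX : IsRegularField T X) (hT : ContDiff ℝ 1 T) (hS : μ S < ∞) :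
    IntegrableOn (fun x => divergence X x / ‖∇ T x‖) S μ := by
  have hgrad := continuous_gradient hT
  have hdiv := continuous_divergence hX.contDiff
  obtain ⟨C, hC⟩ := hX.hasCompactSupport.isCompact.exists_bound_of_continuousOn
    (hdiv.continuousOn.div hgrad.norm.continuousOn fun x hx =>
      norm_ne_zero_iff.2 (hX.gradient_ne_zero x hx))
  refine Measure.integrableOn_of_bounded (M := max C 0) hS.ne
    (hdiv.measurable.div hgrad.norm.measurable).aestronglyMeasurable (.of_forall fun x => ?_)
  by_cases hx : x ∈ tsupport X
  · exact (hC x hx).trans (le_max_left _ _)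
  · simp [divergence_eq_zero_of_notMem_tsupport hx]

end IsRegularField

variable [MeasurableSpace E] [BorelSpace E]

/-- The flux of the vector field `X` through the level set `{T = s}`, in the direction of `∇ T`;
`d` is the dimension of the level set. -/
noncomputable def levelFlux (d : ℕ) (T : E → ℝ) (X : E → E) (s : ℝ) : ℝ :=
  ∫ x in T ⁻¹' {s}, ⟪∇ T x, X x⟫ / ‖∇ T x‖ ∂μH[d]

/-- At the level `t`, the flux of `X` through the level sets of `T` has the derivative predicted by
the divergence theorem together with the coarea formula. -/
def HasFluxDeriv (d : ℕ) (T : E → ℝ) (t : ℝ) (X : E → E) : Prop :=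
  HasDerivAt (levelFlux d T X) (∫ x in T ⁻¹' {t}, divergence X x / ‖∇ T x‖ ∂μH[d]) t

variable {d : ℕ} {T : E → ℝ} {t : ℝ} {X Y : E → E}

theorem levelFlux_add (hT : ContDiff ℝ 1 T) (hX : IsRegularField T X) (hY : IsRegularField T Y)
    {s : ℝ} (hs : μH[d] (T ⁻¹' {s}) < ∞) :
    levelFlux d T (X + Y) s = levelFlux d T X s + levelFlux d T Y s := by
  rw [levelFlux, levelFlux, levelFlux,
    ← integral_add (hX.integrableOn_flux hT hs) (hY.integrableOn_flux hT hs)]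
  simp only [Pi.add_apply, inner_add_right, add_div]

namespace HasFluxDeriv

theorem zero (d : ℕ) (T : E → ℝ) (t : ℝ) : HasFluxDeriv d T t 0 := by
  have hflux : levelFlux d T 0 = fun _ => 0 := by
    funext s
    simp [levelFlux]
  have hdiv (x : E) : divergence (0 : E → E) x = 0 :=
    divergence_eq_zero_of_notMem_tsupport (by simp [tsupport])
  simpa [HasFluxDeriv, hflux, hdiv] using hasDerivAt_const t (0 : ℝ)

theorem add (hT : ContDiff ℝ 1 T) (hfin : ∀ᶠ s in 𝓝 t, μH[d] (T ⁻¹' {s}) < ∞)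
    (hX : IsRegularField T X) (hY : IsRegularField T Y) (hX' : HasFluxDeriv d T t X)
    (hY' : HasFluxDeriv d T t Y) : HasFluxDeriv d T t (X + Y) := by
  have hdiv : ∫ x in T ⁻¹' {t}, divergence (X + Y) x / ‖∇ T x‖ ∂μH[d] =
      (∫ x in T ⁻¹' {t}, divergence X x / ‖∇ T x‖ ∂μH[d]) +
        ∫ x in T ⁻¹' {t}, divergence Y x / ‖∇ T x‖ ∂μH[d] := by
    rw [← integral_add (hX.integrableOn_divergence hT hfin.self_of_nhds)
      (hY.integrableOn_divergence hT hfin.self_of_nhds)]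
    refine integral_congr_ae (.of_forall fun x => ?_)
    simp only [divergence_add (hX.contDiff.differentiable one_ne_zero x)
      (hY.contDiff.differentiable one_ne_zero x), add_div]
  rw [HasFluxDeriv, hdiv]
  exact (HasDerivAt.add hX' hY').congr_of_eventuallyEq
    (hfin.mono fun s hs => levelFlux_add hT hX hY hs)

end HasFluxDeriv

end FluxDerivative

section FluxDerivativeGlobal

variable {E : Type*} [NormedAddCommGroup E] [InnerProductSpace ℝ E] [FiniteDimensional ℝ E]
  [MeasurableSpace E] [BorelSpace E] {d : ℕ} {T : E → ℝ} {t : ℝ} {v : E}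

namespace IsGraphChart

variable {e : OpenPartialHomeomorph E ((ℝ ∙ v)ᗮ × ℝ)}

theorem setIntegral_levelSet_eq_integral_indicator (he : IsGraphChart T v e) (hT : ContDiff ℝ 1 T)
    (s : ℝ) {f : E → ℝ} (hf : Measurable f) (hf0 : ∀ x ∉ e.source, f x = 0) :
    ∫ x in T ⁻¹' {s}, f x * (⟪∇ T x, v⟫ / ‖∇ T x‖) ∂μH[finrank ℝ (ℝ ∙ v)ᗮ] =
      ‖v‖ * ∫ y, e.target.indicator (f ∘ e.symm) (y, s) ∂μH[finrank ℝ (ℝ ∙ v)ᗮ] := by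
  rw [setIntegral_eq_of_subset_of_forall_sdiff_eq_zero (s := T ⁻¹' {s} ∩ e.source)
    (hT.continuous.measurable (measurableSet_singleton s)) inter_subset_left,
    he.setIntegral_levelSet hT s hf, ← integral_indicator (isOpen_slice e s).measurableSet]
  · rfl
  · rintro x ⟨hx, hx'⟩
    rw [hf0 x fun h => hx' ⟨hx, h⟩, zero_mul]

omit [MeasurableSpace E] [BorelSpace E] in
theorem fderiv_indicator_comp_symm (he : IsGraphChart T v e) (hT : ContDiff ℝ 1 T) {ψ : E → ℝ}
    (hψ : ContDiff ℝ 1 ψ) (hc : HasCompactSupport ψ) (hsupp : tsupport ψ ⊆ e.source)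
    (z : (ℝ ∙ v)ᗮ × ℝ) :
    fderiv ℝ (e.target.indicator (ψ ∘ e.symm)) z (0, 1) =
      e.target.indicator ((fun x => fderiv ℝ ψ x v / ⟪∇ T x, v⟫) ∘ e.symm) z := by
  by_cases hz : z ∈ e.target
  · rw [indicator_of_mem hz, (indicator_comp_symm_eventuallyEq hz).fderiv_eq,
      ((hψ.differentiable one_ne_zero _).hasFDerivAt.comp z
        (he.hasStrictFDerivAt_symm hT hz).hasFDerivAt).fderiv]
    simp [graphChartDeriv_symm_apply, div_eq_inv_mul]
  · rw [indicator_of_notMem hz, (indicator_comp_symm_eventuallyEq_zero hc hsupp hz).fderiv_eq]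
    simp

theorem hasFluxDeriv_smul_const (he : IsGraphChart T v e) (hT : ContDiff ℝ 1 T) {ψ : E → ℝ}
    (hψ : ContDiff ℝ 1 ψ) (hc : HasCompactSupport ψ) (hsupp : tsupport ψ ⊆ e.source) (t : ℝ) :
    HasFluxDeriv (finrank ℝ (ℝ ∙ v)ᗮ) T t fun x => ψ x • v := by
  have hzero (x) (hx : x ∉ e.source) : x ∉ tsupport ψ := fun h => hx (hsupp h)
  have hflux (s : ℝ) : levelFlux (finrank ℝ (ℝ ∙ v)ᗮ) T (fun x => ψ x • v) s =
      ‖v‖ * ∫ y, e.target.indicator (ψ ∘ e.symm) (y, s) ∂μH[finrank ℝ (ℝ ∙ v)ᗮ] := by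
    rw [← he.setIntegral_levelSet_eq_integral_indicator hT s hψ.continuous.measurable
      fun x hx => image_eq_zero_of_notMem_tsupport (hzero x hx)]
    simp only [levelFlux, real_inner_smul_right, mul_div_assoc]
  have hmeas : Measurable fun x => fderiv ℝ ψ x v / ⟪∇ T x, v⟫ :=
    ((hψ.continuous_fderiv one_ne_zero).clm_apply continuous_const).measurable.div
      ((continuous_gradient hT).inner continuous_const).measurable
  have hdiv : ∫ x in T ⁻¹' {t}, divergence (fun x => ψ x • v) x / ‖∇ T x‖
      ∂μH[finrank ℝ (ℝ ∙ v)ᗮ] = ‖v‖ * ∫ y, fderiv ℝ (e.target.indicator (ψ ∘ e.symm)) (y, t) (0, 1)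
        ∂μH[finrank ℝ (ℝ ∙ v)ᗮ] := by
    simp only [he.fderiv_indicator_comp_symm hT hψ hc hsupp]
    rw [← he.setIntegral_levelSet_eq_integral_indicator hT t hmeas
      fun x hx => by simp [fderiv_of_notMem_tsupport ℝ (hzero x hx)]]
    refine integral_congr_ae (.of_forall fun x => ?_)
    simp only [divergence_smul_const (hψ.differentiable one_ne_zero x)]
    by_cases hx : x ∈ e.source
    · have := (he.inner_gradient_pos x hx).ne'
      field_simp
    · simp [fderiv_of_notMem_tsupport ℝ (hzero x hx)]
  rw [HasFluxDeriv, hdiv, funext hflux]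
  exact (hasDerivAt_integral_of_contDiff_of_hasCompactSupport
    (contDiff_indicator_comp_symm (he.contDiffOn_symm hT) hψ hc hsupp)
    (.intro (isCompact_image_tsupport hc hsupp) fun z => indicator_comp_symm_eq_zero)
    _ t).const_mul _

end IsGraphChart

theorem exists_nhds_hasFluxDeriv_smul_of_inner_pos (hT : ContDiff ℝ 1 T)
    (hd : finrank ℝ E = d + 1) (t : ℝ) {p : E} (hp : 0 < ⟪∇ T p, v⟫) :
    ∃ U ∈ 𝓝 p, ∀ ψ : E → ℝ, ContDiff ℝ 1 ψ → HasCompactSupport ψ → tsupport ψ ⊆ U →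
      HasFluxDeriv d T t fun x => ψ x • v := by
  obtain ⟨e, he, hpe⟩ := exists_isGraphChart hT hp
  have : Fact (finrank ℝ E = d + 1) := ⟨hd⟩
  have hv : v ≠ 0 := fun h => by simp [h] at hp
  refine ⟨e.source, e.open_source.mem_nhds hpe, fun ψ hψ hc hsupp => ?_⟩
  have := he.hasFluxDeriv_smul_const hT hψ hc hsupp t
  rwa [Submodule.finrank_orthogonal_span_singleton (n := d) hv] at this

section

variable (hT : ContDiff ℝ 1 T) (hd : finrank ℝ E = d + 1)
  (hfin : ∀ᶠ s in 𝓝 t, μH[d] (T ⁻¹' {s}) < ∞)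
include hT hd hfin

-- A direction `v` is the difference of `v + c • ∇ T p` and `c • ∇ T p`, which for large `c` both
-- make an acute angle with `∇ T p`.
theorem exists_nhds_hasFluxDeriv_smul {p : E} (hp : ∇ T p ≠ 0) (v : E) :
    ∃ U ∈ 𝓝 p, ∀ ψ : E → ℝ, ContDiff ℝ 1 ψ → HasCompactSupport ψ → tsupport ψ ⊆ U →
      HasFluxDeriv d T t fun x => ψ x • v := by
  set c := (|⟪∇ T p, v⟫| + 1) / ‖∇ T p‖ ^ 2
  have hpos : 0 < ⟪∇ T p, v + c • ∇ T p⟫ := by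
    rw [inner_add_right, real_inner_smul_right, real_inner_self_eq_norm_sq,
      div_mul_cancel₀ _ (pow_pos (norm_pos_iff.2 hp) 2).ne']
    linarith [neg_abs_le ⟪∇ T p, v⟫]
  obtain ⟨U, hU, hderivU⟩ := exists_nhds_hasFluxDeriv_smul_of_inner_pos hT hd t hpos
  obtain ⟨V, hV, hderivV⟩ := exists_nhds_hasFluxDeriv_smul_of_inner_pos hT hd t
    (real_inner_self_pos.2 hp)
  have hregular : {x | ∇ T x ≠ 0} ∈ 𝓝 p :=
    (isOpen_ne_fun (continuous_gradient hT) continuous_const).mem_nhds hp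
  refine ⟨U ∩ V ∩ {x | ∇ T x ≠ 0}, inter_mem (inter_mem hU hV) hregular, fun ψ hψ hc hsupp => ?_⟩
  have hsupp' : tsupport (fun x => -c * ψ x) ⊆ tsupport ψ :=
    tsupport_mul_subset_right (f := fun _ => -c)
  have hψ' : ContDiff ℝ 1 fun x => -c * ψ x := contDiff_const.mul hψ
  have hc' : HasCompactSupport fun x => -c * ψ x := hc.mul_left
  have hadd := HasFluxDeriv.add hT hfin
    (IsRegularField.smul_const hψ hc (fun x hx => (hsupp hx).2) (v + c • ∇ T p))
    (IsRegularField.smul_const hψ' hc' (fun x hx => (hsupp (hsupp' hx)).2) (∇ T p))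
    (hderivU ψ hψ hc fun x hx => (hsupp hx).1.1)
    (hderivV _ hψ' hc' fun x hx => (hsupp (hsupp' hx)).1.2)
  convert hadd using 2 with x
  simp only [Pi.add_apply]
  module

theorem exists_nhds_hasFluxDeriv {p : E} (hp : ∇ T p ≠ 0) :
    ∃ U ∈ 𝓝 p, ∀ X, IsRegularField T X → tsupport X ⊆ U → HasFluxDeriv d T t X := by
  let b := stdOrthonormalBasis ℝ E
  choose U hU hderiv using fun i => exists_nhds_hasFluxDeriv_smul hT hd hfin hp (b i)
  refine ⟨⋂ i, U i, iInter_mem.2 hU, fun X hX hsupp => ?_⟩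
  have hsum : X = ∑ i, fun x => ⟪b i, X x⟫ • b i := by
    funext x
    simp [b.sum_repr']
  suffices IsRegularField T X ∧ HasFluxDeriv d T t X from this.2
  rw [hsum]
  refine Finset.sum_induction _ (fun Y => IsRegularField T Y ∧ HasFluxDeriv d T t Y)
    (fun Y Z hY hZ => ⟨hY.1.add hZ.1, hY.2.add hT hfin hY.1 hZ.1 hZ.2⟩)
    ⟨.zero T, .zero d T t⟩ fun i _ => ?_
  have hψ : ContDiff ℝ 1 fun x => ⟪b i, X x⟫ := contDiff_const.inner ℝ hX.contDiff
  have hsupp_i : tsupport (fun x => ⟪b i, X x⟫) ⊆ tsupport X :=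
    closure_mono fun x hx hX0 => hx (by simp [hX0])
  have hc : HasCompactSupport fun x => ⟪b i, X x⟫ :=
    hX.hasCompactSupport.of_isClosed_subset (isClosed_tsupport _) hsupp_i
  exact ⟨.smul_const hψ hc (fun x hx => hX.gradient_ne_zero x (hsupp_i hx)) (b i),
    hderiv i _ hψ hc fun x hx => mem_iInter.1 (hsupp (hsupp_i hx)) i⟩

theorem exists_cutoff_hasFluxDeriv {K : Set E} (hK : IsCompact K) (hne : ∀ x ∈ K, ∇ T x ≠ 0) :
    ∃ η : E → ℝ, ContDiff ℝ 1 η ∧ (∀ x ∈ K, η x = 1) ∧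
      ∀ X, IsRegularField T X → HasFluxDeriv d T t (η • X) := by
  refine hK.induction_on
    (p := fun s => ∃ η : E → ℝ, ContDiff ℝ 1 η ∧ (∀ x ∈ s, η x = 1) ∧
      ∀ X, IsRegularField T X → HasFluxDeriv d T t (η • X))
    ⟨0, contDiff_const, by simp, fun X _ => by simpa using .zero d T t⟩ ?_ ?_ fun x hx => ?_
  · rintro s s' hss ⟨η, hη, hone, hderiv⟩
    exact ⟨η, hη, fun x hx => hone x (hss hx), hderiv⟩
  · rintro s s' ⟨η, hη, hone, hderiv⟩ ⟨η', hη', hone', hderiv'⟩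
    refine ⟨η + η' * (1 - η), hη.add (hη'.mul (contDiff_const.sub hη)), ?_, fun X hX => ?_⟩
    · rintro x (hx | hx)
      · simp [hone x hx]
      · simp [hone' x hx]
    · have hX' := hX.smul (contDiff_const (c := (1 : ℝ)).sub hη)
      rw [add_smul, mul_smul]
      exact (hderiv X hX).add hT hfin (hX.smul hη) (hX'.smul hη') (hderiv' _ hX')
  · obtain ⟨U, hU, hderiv⟩ := exists_nhds_hasFluxDeriv hT hd hfin (hne x hx)
    obtain ⟨r, hr, hrU⟩ := Metric.nhds_basis_closedBall.mem_iff.1 hU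
    let f : ContDiffBump x := ⟨r / 2, r, half_pos hr, half_lt_self hr⟩
    refine ⟨Metric.closedBall x (r / 2), mem_nhdsWithin_of_mem_nhds
      (Metric.closedBall_mem_nhds _ (half_pos hr)), f, f.contDiff,
      fun y => f.one_of_mem_closedBall, fun X hX => hderiv _ (hX.smul f.contDiff) ?_⟩
    exact (tsupport_smul_subset_left f X).trans (f.tsupport_eq.trans_subset hrU)

theorem IsRegularField.hasFluxDeriv {X : E → E} (hX : IsRegularField T X) :
    HasFluxDeriv d T t X := by
  obtain ⟨η, -, hone, hderiv⟩ :=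
    exists_cutoff_hasFluxDeriv hT hd hfin hX.hasCompactSupport.isCompact hX.gradient_ne_zero
  have heq : η • X = X := by
    funext x
    by_cases hx : x ∈ tsupport X
    · simp [hone x hx]
    · simp [image_eq_zero_of_notMem_tsupport hx]
  exact heq ▸ hderiv X hX

end

end FluxDerivativeGlobal

section FirstVariation

section Normalize

variable {E : Type*} [NormedAddCommGroup E] [NormedSpace ℝ E]

theorem norm_normalize_sub_normalize_le {g : E} (hg : g ≠ 0) (g' : E) :
    ‖NormedSpace.normalize g' - NormedSpace.normalize g‖ ≤ 2 / ‖g‖ * ‖g' - g‖ := by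
  have hdecomp : ‖g‖ • (NormedSpace.normalize g' - NormedSpace.normalize g) =
      (g' - g) - (‖g'‖ - ‖g‖) • NormedSpace.normalize g' := by
    rw [smul_sub, sub_smul, NormedSpace.norm_smul_normalize, NormedSpace.norm_smul_normalize]
    abel
  have hunit : ‖NormedSpace.normalize g'‖ ≤ 1 := by
    rcases eq_or_ne g' 0 with rfl | hg'
    · simp
    · exact (NormedSpace.norm_normalize_eq_one_iff.2 hg').le
  rw [div_mul_eq_mul_div, le_div_iff₀ (norm_pos_iff.2 hg), mul_comm]
  calc ‖g‖ * ‖NormedSpace.normalize g' - NormedSpace.normalize g‖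
      = ‖(g' - g) - (‖g'‖ - ‖g‖) • NormedSpace.normalize g'‖ := by
        rw [← hdecomp, norm_smul, norm_norm]
    _ ≤ ‖g' - g‖ + |‖g'‖ - ‖g‖| * ‖NormedSpace.normalize g'‖ := by
        rw [← Real.norm_eq_abs, ← norm_smul]
        exact norm_sub_le _ _
    _ ≤ ‖g' - g‖ + ‖g' - g‖ * 1 := by
        gcongr
        exact abs_norm_sub_norm_le g' g
    _ = 2 * ‖g' - g‖ := by ring

theorem norm_fderiv_normalize_le {g : E} (hg : g ≠ 0) :
    ‖fderiv ℝ (NormedSpace.normalize : E → E) g‖ ≤ 2 / ‖g‖ :=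
  norm_fderiv_le_of_lip' ℝ (by positivity) (.of_forall (norm_normalize_sub_normalize_le hg))

theorem contDiffAt_normalize {E : Type*} [NormedAddCommGroup E] [InnerProductSpace ℝ E] {g : E}
    (hg : g ≠ 0) : ContDiffAt ℝ 1 (NormedSpace.normalize : E → E) g :=
  ((contDiffAt_norm ℝ hg).inv (norm_ne_zero_iff.2 hg)).smul contDiffAt_id

end Normalize

variable {E : Type*} [NormedAddCommGroup E] [InnerProductSpace ℝ E] [FiniteDimensional ℝ E]

theorem contDiff_gradient {T : E → ℝ} (hT : ContDiff ℝ 2 T) : ContDiff ℝ 1 (∇ T) :=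
  (InnerProductSpace.toDual ℝ E).symm.toContinuousLinearEquiv.contDiff.comp
    (hT.fderiv_right (by norm_num))

theorem abs_divergence_le (X : E → E) (x : E) :
    |divergence X x| ≤ finrank ℝ E * ‖fderiv ℝ X x‖ := by
  let b := stdOrthonormalBasis ℝ E
  rw [divergence, LinearMap.trace_eq_sum_inner _ b]
  calc |∑ i, ⟪b i, fderiv ℝ X x (b i)⟫| ≤ ∑ i, |⟪b i, fderiv ℝ X x (b i)⟫| :=
        Finset.abs_sum_le_sum_abs _ _
    _ ≤ ∑ _i : Fin (finrank ℝ E), ‖fderiv ℝ X x‖ := Finset.sum_le_sum fun i _ => by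
        have hinner := abs_real_inner_le_norm (b i) (fderiv ℝ X x (b i))
        have hop := (fderiv ℝ X x).le_opNorm (b i)
        rw [b.norm_eq_one, one_mul] at hinner
        rw [b.norm_eq_one, mul_one] at hop
        exact hinner.trans hop
    _ = finrank ℝ E * ‖fderiv ℝ X x‖ := by simp

theorem exists_contDiff_cutoff {K U : Set E} (hK : IsCompact K) (hU : IsOpen U) (hKU : K ⊆ U) :
    ∃ η : E → ℝ, ContDiff ℝ 1 η ∧ HasCompactSupport η ∧ tsupport η ⊆ U ∧
      ∀ᶠ x in 𝓝ˢ K, η x = 1 := by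
  obtain ⟨L, hL, hKL, hLU⟩ := exists_compact_between hK hU hKU
  obtain ⟨η, hη, hη0, -⟩ :=
    exists_contMDiffMap_one_nhds_of_subset_interior (n := 1) (modelWithCornersSelf ℝ E)
      hK.isClosed hKL
  have hsupp : tsupport η ⊆ L :=
    closure_minimal (fun x hx => by_contra fun hxL => hx (hη0 x hxL)) hL.isClosed
  exact ⟨η, η.contMDiff.contDiff, hL.of_isClosed_subset (isClosed_tsupport _) hsupp,
    hsupp.trans hLU, hη⟩

theorem eventually_levelSet_subset {α : Type*} [TopologicalSpace α] {T : α → ℝ} (hT : Continuous T)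
    {t : ℝ} {N : Set ℝ} (hN : N ∈ 𝓝 t) (hcomp : IsCompact (T ⁻¹' N)) {V : Set α} (hV : IsOpen V)
    (htV : T ⁻¹' {t} ⊆ V) : ∀ᶠ s in 𝓝 t, T ⁻¹' {s} ⊆ V := by
  have hclosed : IsClosed (T '' (T ⁻¹' N \ V)) := ((hcomp.diff hV).image hT).isClosed
  have ht : t ∉ T '' (T ⁻¹' N \ V) := fun ⟨x, hx, hxt⟩ => hx.2 (htV hxt)
  filter_upwards [hN, hclosed.isOpen_compl.mem_nhds ht] with s hsN hs x hxs
  rw [mem_preimage, mem_singleton_iff] at hxs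
  exact by_contra fun hxV => hs ⟨x, ⟨by rwa [mem_preimage, hxs], hxV⟩, hxs⟩

variable {T : E → ℝ} {t : ℝ} {x : E}

theorem abs_divergence_normalize_gradient_le (hT : ContDiff ℝ 2 T) (hx : ∇ T x ≠ 0) {M : ℝ}
    (hM : ‖fderiv ℝ (∇ T) x‖ ≤ M) :
    |divergence (fun y => NormedSpace.normalize (∇ T y)) x| / ‖∇ T x‖ ≤
      finrank ℝ E * (2 * M) * (‖∇ T x‖ ^ 2)⁻¹ := by
  have hchain : fderiv ℝ (fun y => NormedSpace.normalize (∇ T y)) x =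
      (fderiv ℝ NormedSpace.normalize (∇ T x)).comp (fderiv ℝ (∇ T) x) :=
    fderiv_comp x ((contDiffAt_normalize hx).differentiableAt one_ne_zero)
      ((contDiff_gradient hT).differentiable one_ne_zero x)
  have hbound : ‖fderiv ℝ (fun y => NormedSpace.normalize (∇ T y)) x‖ ≤ 2 / ‖∇ T x‖ * M := by
    rw [hchain]
    exact (ContinuousLinearMap.opNorm_comp_le _ _).trans
      (mul_le_mul (norm_fderiv_normalize_le hx) hM (norm_nonneg _) (by positivity))
  calc |divergence (fun y => NormedSpace.normalize (∇ T y)) x| / ‖∇ T x‖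
      ≤ finrank ℝ E * (2 / ‖∇ T x‖ * M) / ‖∇ T x‖ := by
        gcongr
        exact (abs_divergence_le _ x).trans (by gcongr)
    _ = finrank ℝ E * (2 * M) * (‖∇ T x‖ ^ 2)⁻¹ := by ring

theorem isRegularField_smul_normalize_gradient (hT : ContDiff ℝ 2 T) {η : E → ℝ}
    (hη : ContDiff ℝ 1 η) (hc : HasCompactSupport η) (hne : ∀ y ∈ tsupport η, ∇ T y ≠ 0) :
    IsRegularField T fun y => η y • NormedSpace.normalize (∇ T y) where
  contDiff := by
    refine contDiff_iff_contDiffAt.2 fun y => ?_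
    by_cases hy : y ∈ tsupport η
    · exact hη.contDiffAt.smul
        ((contDiffAt_normalize (hne y hy)).comp y (contDiff_gradient hT).contDiffAt)
    · refine (contDiffAt_const (c := (0 : E))).congr_of_eventuallyEq ?_
      filter_upwards [(isClosed_tsupport η).isOpen_compl.mem_nhds hy] with z hz
      rw [image_eq_zero_of_notMem_tsupport hz, zero_smul]
  hasCompactSupport := hc.smul_right
  gradient_ne_zero y hy := hne y (tsupport_smul_subset_left η _ hy)

variable [MeasurableSpace E] [BorelSpace E] {d : ℕ}

theorem levelFlux_eq_levelVolume (hT : Continuous T) {X : E → E} {s : ℝ}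
    (hX : ∀ x ∈ T ⁻¹' {s}, ∇ T x ≠ 0 ∧ X x = NormedSpace.normalize (∇ T x)) :
    levelFlux d T X s = (μH[d] (T ⁻¹' {s})).toReal := by
  rw [levelFlux, setIntegral_congr_fun (g := fun _ => (1 : ℝ))
    (hT.measurable (measurableSet_singleton s)) fun x hx => ?_]
  · simp [Measure.real]
  · obtain ⟨hne, hXx⟩ := hX x hx
    have hn : ‖∇ T x‖ ≠ 0 := norm_ne_zero_iff.2 hne
    simp only [hXx]
    rw [NormedSpace.normalize, real_inner_smul_right, real_inner_self_eq_norm_sq]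
    field_simp

theorem hasDerivAt_levelVolume (hT : ContDiff ℝ 2 T) (hd : finrank ℝ E = d + 1)
    (hfin : ∀ᶠ s in 𝓝 t, μH[d] (T ⁻¹' {s}) < ∞) {N : Set ℝ} (hN : N ∈ 𝓝 t)
    (hcomp : IsCompact (T ⁻¹' N)) (hne : ∀ x ∈ T ⁻¹' {t}, ∇ T x ≠ 0) :
    HasDerivAt (fun s => (μH[d] (T ⁻¹' {s})).toReal)
      (∫ x in T ⁻¹' {t}, divergence (fun y => NormedSpace.normalize (∇ T y)) x / ‖∇ T x‖ ∂μH[d])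
      t := by
  have hT1 : ContDiff ℝ 1 T := hT.of_le one_le_two
  have hclosed : IsClosed (T ⁻¹' {t}) := isClosed_singleton.preimage hT.continuous
  have hlevel : IsCompact (T ⁻¹' {t}) :=
    hcomp.of_isClosed_subset hclosed (preimage_mono (singleton_subset_iff.2 (mem_of_mem_nhds hN)))
  have hopen : IsOpen {x | ∇ T x ≠ 0} := isOpen_ne_fun (continuous_gradient hT1) continuous_const
  obtain ⟨η, hη, hηc, hηs, hη1⟩ := exists_contDiff_cutoff hlevel hopen hne
  obtain ⟨V, hV, htV, hηV⟩ := eventually_nhdsSet_iff_exists.1 hη1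
  set X : E → E := fun y => η y • NormedSpace.normalize (∇ T y) with hX
  have hXV (y : E) (hy : y ∈ V) : X y = NormedSpace.normalize (∇ T y) := by
    rw [hX]
    simp only [hηV y hy, one_smul]
  have hflux := (isRegularField_smul_normalize_gradient hT hη hηc hηs).hasFluxDeriv hT1 hd hfin
  have hvolume : (fun s => (μH[d] (T ⁻¹' {s})).toReal) =ᶠ[𝓝 t] levelFlux d T X := by
    filter_upwards [eventually_levelSet_subset hT.continuous hN hcomp hV htV] with s hs
    refine (levelFlux_eq_levelVolume hT.continuous fun x hx => ⟨hηs ?_, hXV x (hs hx)⟩).symm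
    exact subset_tsupport η (by simp [hηV x (hs hx)])
  refine (hflux.congr_of_eventuallyEq hvolume).congr_deriv
    (setIntegral_congr_fun hclosed.measurableSet fun x hx => ?_)
  have hnear : X =ᶠ[𝓝 x] fun y => NormedSpace.normalize (∇ T y) := by
    filter_upwards [hV.mem_nhds (htV hx)] using hXV
  change divergence X x / ‖∇ T x‖ = _
  simp only [divergence, hnear.fderiv_eq]

theorem abs_deriv_levelVolume_le (hT : ContDiff ℝ 2 T) (hd : finrank ℝ E = d + 1)
    (hfin : ∀ᶠ s in 𝓝 t, μH[d] (T ⁻¹' {s}) < ∞) {N : Set ℝ} (hN : N ∈ 𝓝 t)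
    (hcomp : IsCompact (T ⁻¹' N)) (hne : ∀ x ∈ T ⁻¹' {t}, ∇ T x ≠ 0) {M : ℝ}
    (hM : ∀ x ∈ T ⁻¹' {t}, ‖fderiv ℝ (∇ T) x‖ ≤ M) :
    |deriv (fun s => (μH[d] (T ⁻¹' {s})).toReal) t| ≤
      finrank ℝ E * (2 * M) * ∫ x in T ⁻¹' {t}, (‖∇ T x‖ ^ 2)⁻¹ ∂μH[d] := by
  have hgrad : Continuous (∇ T) := continuous_gradient (hT.of_le one_le_two)
  have hclosed : IsClosed (T ⁻¹' {t}) := isClosed_singleton.preimage hT.continuous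
  have hlevel : IsCompact (T ⁻¹' {t}) :=
    hcomp.of_isClosed_subset hclosed (preimage_mono (singleton_subset_iff.2 (mem_of_mem_nhds hN)))
  rw [← Real.norm_eq_abs, (hasDerivAt_levelVolume hT hd hfin hN hcomp hne).deriv,
    ← integral_const_mul]
  refine norm_integral_le_of_norm_le ?_ ((ae_restrict_iff' hclosed.measurableSet).2
    (.of_forall fun x hx => ?_))
  · obtain ⟨C, hC⟩ := hlevel.exists_bound_of_continuousOn ((hgrad.norm.pow 2).continuousOn.inv₀
      fun x hx => pow_ne_zero 2 (norm_ne_zero_iff.2 (hne x hx)))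
    exact (Measure.integrableOn_of_bounded (M := C) hfin.self_of_nhds.ne
      (hgrad.norm.pow 2).measurable.inv.aestronglyMeasurable
      ((ae_restrict_iff' hclosed.measurableSet).2 (.of_forall hC))).const_mul _
  · rw [norm_div, norm_norm]
    exact abs_divergence_normalize_gradient_le hT (hne x hx) (hM x hx)

end FirstVariation

section NondegenerateZeros

open Asymptotics

section Topological

variable {α F H : Type*} [TopologicalSpace α] [NormedAddCommGroup F] [NormedAddCommGroup H]
  {G : α → F}

theorem isBigO_of_continuousAt_of_ne_zero {f : α → H} {p : α} (hf : ContinuousAt f p)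
    (hG : ContinuousAt G p) (hne : G p ≠ 0) : f =O[𝓝 p] G := by
  have hbound : (fun _ => (1 : ℝ)) =O[𝓝 p] G := (isBigO_const_left_iff_pos_le_norm one_ne_zero).2
    ⟨‖G p‖ / 2, by positivity,
      hG.norm.eventually_const_le (half_lt_self (norm_pos_iff.2 hne))⟩
  exact (hf.isBigO_one ℝ).trans hbound

theorem exists_finset_norm_le_of_forall_isBigO {K : Set α} (hK : IsCompact K) {f : α → α → H}
    (h : ∀ p ∈ K, f p =O[𝓝 p] G) :
    ∃ (Z : Finset α) (c : ℝ), 0 < c ∧ ∀ x ∈ K, ∃ p ∈ Z, ‖f p x‖ ≤ c * ‖G x‖ := by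
  choose! c hbound using fun p hp => (h p hp).bound
  obtain ⟨Z, -, hcover⟩ := hK.elim_nhds_subcover _ hbound
  obtain ⟨C, hC⟩ := (Z.image c).exists_le
  refine ⟨Z, max C 1, by positivity, fun x hx => ?_⟩
  obtain ⟨p, hp, hxp⟩ := mem_iUnion₂.1 (hcover hx)
  refine ⟨p, hp, hxp.trans ?_⟩
  gcongr
  exact (hC _ (Finset.mem_image_of_mem c hp)).trans (le_max_left _ _)

end Topological

section NormedSpace

variable {E F : Type*} [NormedAddCommGroup E] [NormedSpace ℝ E]
  [NormedAddCommGroup F] [NormedSpace ℝ F] {G : E → F} {p : E}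

theorem isBigO_sub_of_injective_fderiv [FiniteDimensional ℝ E] (hG : DifferentiableAt ℝ G p)
    (hinj : Function.Injective (fderiv ℝ G p)) :
    (fun x => x - p) =O[𝓝 p] fun x => G x - G p := by
  obtain ⟨K, -, hK⟩ := LinearMap.exists_antilipschitzWith (fderiv ℝ G p : E →ₗ[ℝ] F)
    (LinearMap.ker_eq_bot.2 hinj)
  have hlin : (fun x => x - p) =O[𝓝 p] fun x => fderiv ℝ G p (x - p) :=
    .of_bound K (.of_forall fun x => by
      simpa only [dist_eq_norm, sub_zero, map_zero, ContinuousLinearMap.coe_coe]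
        using hK.le_mul_dist (x - p) 0)
  have hrem := (hasFDerivAt_iff_isLittleO.1 hG.hasFDerivAt).trans_isBigO hlin
  refine hlin.trans (hrem.right_isBigO_add.congr_right fun x => ?_)
  simp

theorem isBigO_norm_sub_sq_of_fderiv_eq_zero {T : E → ℝ} (hT : ContDiffAt ℝ 2 T p)
    (hp : fderiv ℝ T p = 0) (hTp : T p = 0) : T =O[𝓝 p] fun x => ‖x - p‖ ^ 2 := by
  have hd : DifferentiableAt ℝ (fderiv ℝ T) p :=
    (hT.fderiv_right (m := 1) (by norm_num)).differentiableAt one_ne_zero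
  have hderiv : fderiv ℝ T =O[𝓝 p] fun x => ‖x - p‖ ^ (1 : ℝ) := by
    simpa only [hp, sub_zero, Real.rpow_one] using hd.isBigO_sub.norm_right
  have hdiff : ∀ᶠ x in 𝓝 p, DifferentiableAt ℝ T x :=
    (hT.eventually (by simp)).mono fun x hx => hx.differentiableAt two_ne_zero
  refine (isBigO_norm_rpow_add_one_of_fderiv_of_apply_eq_zero zero_le_one hdiff hderiv
    hTp).congr_right fun x => ?_
  rw [one_add_one_eq_two, Real.rpow_two]

theorem exists_finset_norm_sub_le [FiniteDimensional ℝ E] (hG : Differentiable ℝ G)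
    {K : Set E} (hK : IsCompact K)
    (hnd : ∀ p ∈ K, G p = 0 → Function.Injective (fderiv ℝ G p)) :
    ∃ (Z : Finset E) (c : ℝ), 0 < c ∧ ∀ x ∈ K, ∃ p ∈ Z, ‖x - p‖ ≤ c * ‖G x‖ := by
  refine exists_finset_norm_le_of_forall_isBigO hK fun p hp => ?_
  by_cases h0 : G p = 0
  · simpa only [h0, sub_zero] using isBigO_sub_of_injective_fderiv (hG p) (hnd p hp h0)
  · exact isBigO_of_continuousAt_of_ne_zero (by fun_prop) (hG p).continuousAt h0

end NormedSpace

variable {E : Type*} [NormedAddCommGroup E] [InnerProductSpace ℝ E] [FiniteDimensional ℝ E]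

theorem gradient_eq_zero_iff {T : E → ℝ} {x : E} : ∇ T x = 0 ↔ fderiv ℝ T x = 0 :=
  (InnerProductSpace.toDual ℝ E).symm.map_eq_zero_iff

theorem exists_abs_le_mul_norm_gradient_sq {T : E → ℝ} (hT : ContDiff ℝ 2 T)
    {K : Set E} (hK : IsCompact K)
    (hnd : ∀ p ∈ K, ∇ T p = 0 → Function.Injective (fderiv ℝ (∇ T) p))
    (hval : ∀ p ∈ K, ∇ T p = 0 → T p = 0) :
    ∃ c : ℝ, 0 < c ∧ ∀ x ∈ K, |T x| ≤ c * ‖∇ T x‖ ^ 2 := by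
  have hgrad : ContDiff ℝ 1 (∇ T) := contDiff_gradient hT
  have hlocal (p : E) (hp : p ∈ K) : T =O[𝓝 p] fun x => ‖∇ T x‖ ^ 2 := by
    by_cases h0 : ∇ T p = 0
    · have hcrit : fderiv ℝ T p = 0 := gradient_eq_zero_iff.1 h0
      have hsub := isBigO_sub_of_injective_fderiv (hgrad.differentiable one_ne_zero p)
        (hnd p hp h0)
      simp only [h0, sub_zero] at hsub
      exact (isBigO_norm_sub_sq_of_fderiv_eq_zero hT.contDiffAt hcrit (hval p hp h0)).trans
        (hsub.norm_norm.pow 2)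
    · exact isBigO_of_continuousAt_of_ne_zero hT.continuous.continuousAt
        (hgrad.continuous.norm.pow 2).continuousAt (by simpa using h0)
  obtain ⟨Z, c, hc, hbound⟩ := exists_finset_norm_le_of_forall_isBigO hK hlocal
  refine ⟨c, hc, fun x hx => ?_⟩
  obtain ⟨-, -, hx⟩ := hbound x hx
  simpa only [Real.norm_eq_abs, abs_pow, abs_norm] using hx

end NondegenerateZeros

section ShellEstimate

variable {E : Type*} [NormedAddCommGroup E] [InnerProductSpace ℝ E]

theorem dist_le_two_mul_dist_orthogonalProjectionOnto {v x y : E} (hv : v ≠ 0)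
    (h : |⟪v, x - y⟫| ≤ ‖v‖ / 2 * ‖x - y‖) :
    dist x y ≤ 2 * dist ((ℝ ∙ v)ᗮ.orthogonalProjectionOnto x)
      ((ℝ ∙ v)ᗮ.orthogonalProjectionOnto y) := by
  have hpyth := norm_sq_mul_norm_sq_eq_orthogonalProjection (x - y) v
  have hsq : ⟪v, x - y⟫ ^ 2 ≤ (‖v‖ / 2 * ‖x - y‖) ^ 2 := sq_le_sq' (abs_le.1 h).1 (abs_le.1 h).2
  rw [dist_eq_norm, dist_eq_norm, ← map_sub]
  refine (sq_le_sq₀ (by positivity) (by positivity)).1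
    (le_of_mul_le_mul_right ?_ (by positivity : 0 < ‖v‖ ^ 2))
  rw [real_inner_comm] at hpyth
  nlinarith

variable [FiniteDimensional ℝ E]

theorem abs_inner_gradient_sub_le_of_mem_levelSet {T : E → ℝ} (hT : Differentiable ℝ T) {S : Set E}
    (hS : Convex ℝ S) {M : ℝ≥0} (hM : LipschitzOnWith M (fderiv ℝ T) S) {x₀ x y : E} {r : ℝ}
    (hx₀ : x₀ ∈ S) (hx : x ∈ S ∩ Metric.closedBall x₀ r) (hy : y ∈ S ∩ Metric.closedBall x₀ r)
    (hxy : T x = T y) : |⟪∇ T x₀, x - y⟫| ≤ M * r * ‖x - y‖ := by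
  have hmean := (hS.inter (convex_closedBall x₀ r)).norm_image_sub_le_of_norm_fderiv_le'
    (φ := fderiv ℝ T x₀) (C := M * r) (fun z _ => hT z) (fun z hz => ?_) hy hx
  · simpa [hxy, ← inner_gradient_left] using hmean
  · refine (hM.norm_sub_le hz.1 hx₀).trans ?_
    gcongr
    exact mem_closedBall_iff_norm.1 hz.2

theorem exists_finset_mem_closedBall_of_norm_sub_le (a : ℝ) {b : ℝ} (hb : 0 < b) :
    ∃ F : Finset E, ∀ l : ℝ, 0 < l → ∀ p x : E, ‖x - p‖ ≤ a * l →
      ∃ w ∈ F, x ∈ Metric.closedBall (p + l • w) (b * l) := by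
  obtain ⟨F, -, hF, hcover⟩ := (isCompact_closedBall (0 : E) a).finite_cover_balls hb
  refine ⟨hF.toFinset, fun l hl p x hx => ?_⟩
  have hscaled : l⁻¹ • (x - p) ∈ Metric.closedBall (0 : E) a := by
    rw [mem_closedBall_zero_iff, norm_smul, norm_inv, Real.norm_of_nonneg hl.le,
      inv_mul_le_iff₀ hl, mul_comm]
    exact hx
  obtain ⟨w, hw, hxw⟩ := mem_iUnion₂.1 (hcover hscaled)
  refine ⟨w, hF.mem_toFinset.2 hw, mem_closedBall_iff_norm.2 ?_⟩
  have hdiff : x - (p + l • w) = l • (l⁻¹ • (x - p) - w) := by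
    rw [smul_sub, smul_inv_smul₀ hl.ne']
    abel
  rw [hdiff, norm_smul, Real.norm_of_nonneg hl.le, mul_comm]
  gcongr
  exact (mem_ball_iff_norm.1 hxw).le

theorem exists_finset_mem_closedBall_of_norm_le {G : E → E} (hG : Differentiable ℝ G)
    {K : Set E} (hK : IsCompact K)
    (hnd : ∀ p ∈ K, G p = 0 → Function.Injective (fderiv ℝ G p)) {ρ : ℝ} (hρ : 0 < ρ) :
    ∃ F : Finset (E × E), ∀ l : ℝ, 0 < l → ∀ x ∈ K, ‖G x‖ ≤ l →
      ∃ z ∈ F, x ∈ Metric.closedBall (z.1 + l • z.2) (ρ * l) := by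
  obtain ⟨Z, c, hc, hZ⟩ := exists_finset_norm_sub_le hG hK hnd
  obtain ⟨F, hF⟩ := exists_finset_mem_closedBall_of_norm_sub_le (E := E) c hρ
  refine ⟨Z ×ˢ F, fun l hl x hx hxl => ?_⟩
  obtain ⟨p, hp, hxp⟩ := hZ x hx
  obtain ⟨w, hw, hxw⟩ := hF l hl p x (hxp.trans (by gcongr))
  exact ⟨(p, w), Finset.mem_product.2 ⟨hp, hw⟩, hxw⟩

/-- The `d`-dimensional Hausdorff measure of the unit ball of a `d`-dimensional Euclidean space, in
the normalization of `μH[d]`. -/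
noncomputable def unitBallMeasure (d : ℕ) : ℝ :=
  (μH[d] (Metric.closedBall (0 : EuclideanSpace ℝ (Fin d)) 1)).toReal

theorem unitBallMeasure_nonneg (d : ℕ) : 0 ≤ unitBallMeasure d :=
  ENNReal.toReal_nonneg

variable [MeasurableSpace E] [BorelSpace E] {d : ℕ}

theorem hausdorffMeasure_closedBall (hd : finrank ℝ E = d) (x : E) {r : ℝ} (hr : 0 ≤ r) :
    μH[d] (Metric.closedBall x r) = ENNReal.ofReal (unitBallMeasure d * r ^ d) := by
  subst hd
  have : Measure.IsAddHaarMeasure (μH[finrank ℝ E] : Measure E) :=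
    isAddHaarMeasure_hausdorffMeasure
  let e := (stdOrthonormalBasis ℝ E).repr
  have hunit : μH[finrank ℝ E] (Metric.closedBall (0 : E) 1) =
      ENNReal.ofReal (unitBallMeasure (finrank ℝ E)) := by
    rw [unitBallMeasure, ← e.map_zero, ← e.image_closedBall, e.isometry.hausdorffMeasure_image
      (.inl (Nat.cast_nonneg _)), ENNReal.ofReal_toReal measure_closedBall_lt_top.ne]
  rw [Measure.addHaar_closedBall' _ _ hr, hunit, mul_comm,
    ENNReal.ofReal_mul (unitBallMeasure_nonneg _)]

theorem hausdorffMeasure_le_of_abs_inner_le (hd : finrank ℝ E = d + 1) {v x₀ : E} (hv : v ≠ 0)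
    {A : Set E} {r : ℝ} (hr : 0 ≤ r) (hA : A ⊆ Metric.closedBall x₀ r)
    (h : ∀ x ∈ A, ∀ y ∈ A, |⟪v, x - y⟫| ≤ ‖v‖ / 2 * ‖x - y‖) :
    μH[d] A ≤ ENNReal.ofReal (unitBallMeasure d * (2 * r) ^ d) := by
  have : Fact (finrank ℝ E = d + 1) := ⟨hd⟩
  set π := (ℝ ∙ v)ᗮ.orthogonalProjectionOnto
  have hπ : π '' A ⊆ Metric.closedBall (π x₀) r := by
    rintro _ ⟨x, hx, rfl⟩
    rw [mem_closedBall_iff_norm, ← map_sub]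
    exact (Submodule.norm_orthogonalProjectionOnto_apply_le _ _).trans
      (mem_closedBall_iff_norm.1 (hA hx))
  have hanti : μH[d] (id '' A) ≤ ((2 : ℝ≥0) : ℝ≥0∞) ^ (d : ℝ) * μH[d] (π '' A) :=
    hausdorffMeasure_image_le_of_dist_le (fun x hx y hy =>
      dist_le_two_mul_dist_orthogonalProjectionOnto hv (h x hx y hy)) (Nat.cast_nonneg d)
  calc μH[d] A ≤ ((2 : ℝ≥0) : ℝ≥0∞) ^ (d : ℝ) * μH[d] (π '' A) := by rwa [image_id] at hanti
    _ ≤ ENNReal.ofReal (2 ^ d) * ENNReal.ofReal (unitBallMeasure d * r ^ d) := by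
        gcongr
        · simp [ENNReal.ofReal_pow]
        · rw [← hausdorffMeasure_closedBall (Submodule.finrank_orthogonal_span_singleton hv) _ hr]
          exact measure_mono hπ
    _ = ENNReal.ofReal (unitBallMeasure d * (2 * r) ^ d) := by
        rw [← ENNReal.ofReal_mul (by positivity)]
        ring_nf

theorem hausdorffMeasure_levelSet_le_of_forall_dist_le (hd : finrank ℝ E = d + 1) {T : E → ℝ}
    (hT : Differentiable ℝ T) {S : Set E} (hS : Convex ℝ S) {M : ℝ≥0}
    (hM : LipschitzOnWith M (fderiv ℝ T) S) {s : ℝ} {A : Set E} (hAS : A ⊆ S ∩ T ⁻¹' {s})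
    {r : ℝ} (hr : 0 ≤ r) (hdiam : ∀ x ∈ A, ∀ y ∈ A, dist x y ≤ r) (hne : ∀ x ∈ A, ∇ T x ≠ 0)
    (hgrad : ∀ x ∈ A, M * r ≤ ‖∇ T x‖ / 2) :
    μH[d] A ≤ ENNReal.ofReal (unitBallMeasure d * (2 * r) ^ d) := by
  obtain rfl | ⟨x₀, hx₀⟩ := A.eq_empty_or_nonempty
  · simp
  refine hausdorffMeasure_le_of_abs_inner_le hd (hne x₀ hx₀) hr (fun x hx => hdiam x hx x₀ hx₀)
    fun x hx y hy => ?_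
  refine (abs_inner_gradient_sub_le_of_mem_levelSet hT hS hM (hAS hx₀).1
    ⟨(hAS hx).1, hdiam x hx x₀ hx₀⟩ ⟨(hAS hy).1, hdiam y hy x₀ hx₀⟩
    ((hAS hx).2.trans (hAS hy).2.symm)).trans ?_
  gcongr
  exact hgrad x₀ hx₀

theorem exists_forall_hausdorffMeasure_gradientShell_le (hd : finrank ℝ E = d + 1) {T : E → ℝ}
    (hT : ContDiff ℝ 2 T) {K : Set E} (hK : IsCompact K)
    (hnd : ∀ p ∈ K, ∇ T p = 0 → Function.Injective (fderiv ℝ (∇ T) p)) :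
    ∃ C : ℝ, 0 ≤ C ∧ ∀ l s : ℝ, 0 < l →
      μH[d] (K ∩ T ⁻¹' {s} ∩ (‖∇ T ·‖) ⁻¹' Ioc (l / 2) l) ≤ ENNReal.ofReal (C * l ^ d) := by
  obtain ⟨R, hR⟩ := hK.isBounded.subset_closedBall (0 : E)
  have hball : Convex ℝ (Metric.closedBall (0 : E) R) := convex_closedBall 0 R
  obtain ⟨M, hM⟩ := (hT.fderiv_right (m := 1) (by norm_num)).contDiffOn.exists_lipschitzOnWith
    one_ne_zero hball (isCompact_closedBall 0 R)
  set ρ : ℝ := (8 * (M + 1))⁻¹ with hρ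
  have hMρ : M * (2 * ρ) ≤ 1 / 4 := by
    rw [hρ]
    field_simp
    linarith
  obtain ⟨F, hF⟩ := exists_finset_mem_closedBall_of_norm_le
    ((contDiff_gradient hT).differentiable one_ne_zero) hK hnd (by positivity : 0 < ρ)
  refine ⟨F.card * (unitBallMeasure d * (4 * ρ) ^ d), mul_nonneg (Nat.cast_nonneg _)
    (mul_nonneg (unitBallMeasure_nonneg d) (by positivity)), fun l s hl => ?_⟩
  set A := K ∩ T ⁻¹' {s} ∩ (‖∇ T ·‖) ⁻¹' Ioc (l / 2) l
  have hcover : A ⊆ ⋃ z ∈ F, A ∩ Metric.closedBall (z.1 + l • z.2) (ρ * l) := fun x hx =>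
    have ⟨z, hz, hxz⟩ := hF l hl x hx.1.1 hx.2.2
    mem_iUnion₂.2 ⟨z, hz, hx, hxz⟩
  have hpiece (z : E × E) : μH[d] (A ∩ Metric.closedBall (z.1 + l • z.2) (ρ * l)) ≤
      ENNReal.ofReal (unitBallMeasure d * (2 * (2 * ρ * l)) ^ d) := by
    refine hausdorffMeasure_levelSet_le_of_forall_dist_le hd (hT.differentiable two_ne_zero) hball
      hM (fun x hx => ⟨hR hx.1.1.1, hx.1.1.2⟩) (by positivity) (fun x hx y hy => ?_)
      (fun x hx => norm_pos_iff.1 ((half_pos hl).trans hx.1.2.1)) fun x hx => ?_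
    · linarith [dist_triangle_right x y (z.1 + l • z.2), Metric.mem_closedBall.1 hx.2,
        Metric.mem_closedBall.1 hy.2]
    · nlinarith [show l / 2 < ‖∇ T x‖ from hx.1.2.1]
  calc μH[d] A ≤ ∑ z ∈ F, μH[d] (A ∩ Metric.closedBall (z.1 + l • z.2) (ρ * l)) :=
        (measure_mono hcover).trans (measure_biUnion_finset_le _ _)
    _ ≤ F.card • ENNReal.ofReal (unitBallMeasure d * (2 * (2 * ρ * l)) ^ d) :=
        Finset.sum_le_card_nsmul _ _ _ fun z _ => hpiece z
    _ = _ := by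
        rw [← ENNReal.ofReal_nsmul, nsmul_eq_mul]
        ring_nf

end ShellEstimate

section DyadicSummation

/-- The sum of `l ^ d / l ^ 2` over the dyadic scales `l = B, B / 2, …, B / 2 ^ N`. It bounds
`∫ f⁻²` when each shell `f ∈ (l / 2, l]` has measure of order `l ^ d` and `f` takes values in
`(B / 2 ^ (N + 1), B]`. -/
noncomputable def dyadicSum (d N : ℕ) (B : ℝ) : ℝ :=
  ∑ k ∈ Finset.range (N + 1), (B / 2 ^ k) ^ d / (B / 2 ^ k) ^ 2

section Bounds

variable {d N : ℕ} {A B t : ℝ}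

theorem dyadicSum_nonneg (hB : 0 ≤ B) : 0 ≤ dyadicSum d N B :=
  Finset.sum_nonneg fun _ _ => by positivity

theorem dyadicSum_le_of_three_le (hd : 3 ≤ d) (hB : 0 < B) :
    dyadicSum d N B ≤ 2 * B ^ (d - 2) := by
  obtain ⟨j, rfl⟩ := Nat.exists_eq_add_of_le' hd
  have hterm (k : ℕ) : (B / 2 ^ k) ^ (j + 3) / (B / 2 ^ k) ^ 2 ≤ B ^ (j + 1) * (1 / 2) ^ k := by
    calc (B / 2 ^ k) ^ (j + 3) / (B / 2 ^ k) ^ 2 = B ^ (j + 1) * ((1 / 2) ^ k) ^ (j + 1) := by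
          rw [← mul_pow, one_div, inv_pow, ← div_eq_mul_inv, div_eq_iff (by positivity), ← pow_add]
      _ ≤ B ^ (j + 1) * (1 / 2) ^ k := by
          gcongr
          exact pow_le_of_le_one (by positivity) (pow_le_one₀ (by norm_num) (by norm_num))
            j.succ_ne_zero
  calc dyadicSum (j + 3) N B ≤ B ^ (j + 1) * ∑ k ∈ Finset.range (N + 1), (1 / 2 : ℝ) ^ k := by
        rw [Finset.mul_sum]
        exact Finset.sum_le_sum fun k _ => hterm k
    _ ≤ B ^ (j + 1) * 2 := by
        gcongr
        exact sum_geometric_two_le _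
    _ = 2 * B ^ (j + 3 - 2) := by rw [mul_comm]; rfl

theorem dyadicSum_two (hB : B ≠ 0) : dyadicSum 2 N B = N + 1 := by
  have hterm (k : ℕ) : (B / 2 ^ k) ^ 2 / (B / 2 ^ k) ^ 2 = 1 :=
    div_self (pow_ne_zero 2 (div_ne_zero hB (by positivity)))
  simp [dyadicSum, hterm]

theorem dyadicSum_one_le (hB : 0 < B) : dyadicSum 1 N B ≤ 2 / B * 2 ^ N := by
  have hterm (k : ℕ) : (B / 2 ^ k) ^ 1 / (B / 2 ^ k) ^ 2 = B⁻¹ * 2 ^ k := by field_simp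
  simp only [dyadicSum, hterm]
  rw [← Finset.mul_sum, geom_sum_eq (by norm_num), pow_succ]
  field_simp
  linarith

theorem exists_natCast_add_one_le_mul_log (hA : 0 < A) :
    ∃ C : ℝ, 0 ≤ C ∧ ∀ (t : ℝ) (N : ℕ), t ≠ 0 → |t| ≤ 1 / 2 → 2 ^ N ≤ A / √|t| →
      N + 1 ≤ C * Real.log (1 / |t|) := by
  have h2 : 0 < Real.log 2 := Real.log_pos one_lt_two
  refine ⟨((|Real.log A| / Real.log 2 + 1) / Real.log 2 + 1 / Real.log 2), by positivity,
    fun t N ht ht2 hN => ?_⟩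
  have ht0 : 0 < |t| := abs_pos.2 ht
  set L := Real.log (1 / |t|) with hL
  have hL2 : Real.log 2 ≤ L :=
    Real.log_le_log two_pos ((le_div_iff₀ ht0).2 (by linarith))
  have hNL : N * Real.log 2 ≤ |Real.log A| + L := by
    have hlog := Real.log_le_log (by positivity) hN
    rw [Real.log_pow, Real.log_div hA.ne' (by positivity), Real.log_sqrt ht0.le] at hlog
    rw [one_div, Real.log_inv] at hL
    linarith [le_abs_self (Real.log A)]
  have hAL : |Real.log A| ≤ |Real.log A| / Real.log 2 * L := by
    rw [div_mul_eq_mul_div, le_div_iff₀ h2]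
    gcongr
  calc (N + 1 : ℝ) ≤ (|Real.log A| / Real.log 2 * L + L) / Real.log 2 + L / Real.log 2 := by
        gcongr
        · rw [le_div_iff₀ h2]
          linarith
        · rwa [one_le_div h2]
    _ = _ := by ring

theorem exists_dyadicSum_le (d : ℕ) (hA : 0 < A) (hB : 0 < B) :
    ∃ C : ℝ, 0 < C ∧ ∀ (t : ℝ) (N : ℕ), t ≠ 0 → |t| ≤ 1 / 2 → 2 ^ N ≤ A / √|t| →
      (3 ≤ d → dyadicSum d N B ≤ C) ∧
      (d = 2 → dyadicSum d N B ≤ C * Real.log (1 / |t|)) ∧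
      (d = 1 → dyadicSum d N B ≤ C * |t| ^ (-(1 / 2) : ℝ)) := by
  obtain ⟨C₂, hC₂, hlog⟩ := exists_natCast_add_one_le_mul_log hA
  refine ⟨2 * B ^ (d - 2) + C₂ + 2 / B * A, by positivity, fun t N ht ht2 hN =>
    ⟨fun hd => ?_, ?_, ?_⟩⟩
  · rw [add_assoc]
    exact (dyadicSum_le_of_three_le hd hB).trans (le_add_of_nonneg_right (by positivity))
  · rintro rfl
    have hL : 0 ≤ Real.log (1 / |t|) :=
      Real.log_nonneg ((one_le_div (abs_pos.2 ht)).2 (by linarith))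
    rw [dyadicSum_two hB.ne']
    refine (hlog t N ht ht2 hN).trans (mul_le_mul_of_nonneg_right ?_ hL)
    linarith [show 0 ≤ 2 * B ^ (2 - 2) by positivity, show 0 ≤ 2 / B * A by positivity]
  · rintro rfl
    have hsqrt : |t| ^ (-(1 / 2) : ℝ) = (√|t|)⁻¹ := by
      rw [Real.rpow_neg (abs_nonneg t), Real.sqrt_eq_rpow]
    calc dyadicSum 1 N B ≤ 2 / B * (A / √|t|) := (dyadicSum_one_le hB).trans (by gcongr)
      _ = 2 / B * A * |t| ^ (-(1 / 2) : ℝ) := by rw [hsqrt]; ring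
      _ ≤ _ := by
        gcongr
        exact le_add_of_nonneg_left (by positivity)

end Bounds

variable {X : Type*} {f : X → ℝ} {S : Set X} {b B C : ℝ} {d N : ℕ}

theorem subset_biUnion_dyadicShell (hb : 0 < b) (hfb : ∀ x ∈ S, b ≤ f x) (hfB : ∀ x ∈ S, f x ≤ B)
    (hN : B / b < 2 ^ (N + 1)) :
    S ⊆ ⋃ k ∈ Finset.range (N + 1), S ∩ f ⁻¹' Ioc (B / 2 ^ k / 2) (B / 2 ^ k) := by
  intro x hx
  have hfx : 0 < f x := hb.trans_le (hfb x hx)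
  obtain ⟨k, hk, hk'⟩ := exists_nat_pow_near ((one_le_div hfx).2 (hfB x hx)) (one_lt_two (α := ℝ))
  refine mem_iUnion₂.2 ⟨k, Finset.mem_range.2 ?_, hx, ?_, ?_⟩
  · refine (pow_lt_pow_iff_right₀ (one_lt_two (α := ℝ))).1 ((hk.trans ?_).trans_lt hN)
    have hB : 0 ≤ B := hfx.le.trans (hfB x hx)
    gcongr
    exact hfb x hx
  · rwa [div_div, ← pow_succ, div_lt_comm₀ (by positivity) hfx]
  · rwa [le_div_comm₀ hfx (by positivity)]

variable [MeasurableSpace X] {μ : Measure X}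

theorem measure_lt_top_of_dyadicShell_le (hb : 0 < b) (hB : 0 < B) (hfb : ∀ x ∈ S, b ≤ f x)
    (hfB : ∀ x ∈ S, f x ≤ B)
    (hshell : ∀ l, 0 < l → μ (S ∩ f ⁻¹' Ioc (l / 2) l) ≤ ENNReal.ofReal (C * l ^ d)) :
    μ S < ∞ := by
  obtain ⟨N, hN⟩ := pow_unbounded_of_one_lt (B / b) (one_lt_two (α := ℝ))
  have hN' : B / b < 2 ^ (N + 1) := hN.trans (pow_lt_pow_right₀ one_lt_two N.lt_succ_self)
  refine (measure_mono (subset_biUnion_dyadicShell hb hfb hfB hN')).trans_lt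
    (measure_biUnion_lt_top (Finset.finite_toSet _) fun k _ => ?_)
  exact (hshell _ (by positivity)).trans_lt ENNReal.ofReal_lt_top

theorem setLIntegral_dyadicShell_inv_sq_le (hf : Measurable f) (hS : MeasurableSet S) {l : ℝ}
    (hl : 0 < l) (hshell : μ (S ∩ f ⁻¹' Ioc (l / 2) l) ≤ ENNReal.ofReal (C * l ^ d)) :
    ∫⁻ x in S ∩ f ⁻¹' Ioc (l / 2) l, ENNReal.ofReal (f x ^ 2)⁻¹ ∂μ ≤
      ENNReal.ofReal (4 * C * (l ^ d / l ^ 2)) := by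
  have hmeas : MeasurableSet (S ∩ f ⁻¹' Ioc (l / 2) l) := hS.inter (hf measurableSet_Ioc)
  calc ∫⁻ x in S ∩ f ⁻¹' Ioc (l / 2) l, ENNReal.ofReal (f x ^ 2)⁻¹ ∂μ
      ≤ ∫⁻ _ in S ∩ f ⁻¹' Ioc (l / 2) l, ENNReal.ofReal ((l / 2) ^ 2)⁻¹ ∂μ := by
        refine setLIntegral_mono' hmeas fun x hx => ?_
        gcongr
        exact hx.2.1.le
    _ ≤ ENNReal.ofReal ((l / 2) ^ 2)⁻¹ * ENNReal.ofReal (C * l ^ d) := by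
        rw [setLIntegral_const]
        gcongr
    _ = ENNReal.ofReal (4 * C * (l ^ d / l ^ 2)) := by
        rw [← ENNReal.ofReal_mul (by positivity)]
        congr 1
        field_simp
        ring

theorem setIntegral_inv_sq_le_dyadicSum (hf : Measurable f) (hS : MeasurableSet S) (hb : 0 < b)
    (hB : 0 < B) (hC : 0 ≤ C) (hfb : ∀ x ∈ S, b ≤ f x) (hfB : ∀ x ∈ S, f x ≤ B)
    (hN : B / b < 2 ^ (N + 1))
    (hshell : ∀ l, 0 < l → μ (S ∩ f ⁻¹' Ioc (l / 2) l) ≤ ENNReal.ofReal (C * l ^ d)) :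
    ∫ x in S, (f x ^ 2)⁻¹ ∂μ ≤ 4 * C * dyadicSum d N B := by
  set A : ℕ → Set X := fun k => S ∩ f ⁻¹' Ioc (B / 2 ^ k / 2) (B / 2 ^ k)
  have hcover : S ⊆ ⋃ k : Finset.range (N + 1), A k := by
    simpa only [iUnion_subtype] using subset_biUnion_dyadicShell hb hfb hfB hN
  have hmeas : Measurable fun x => (f x ^ 2)⁻¹ := (hf.pow_const 2).inv
  rw [integral_eq_lintegral_of_nonneg_ae (.of_forall fun x => by positivity)
    hmeas.aestronglyMeasurable]
  refine ENNReal.toReal_le_of_le_ofReal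
    (mul_nonneg (by positivity) (dyadicSum_nonneg hB.le)) ?_
  calc ∫⁻ x in S, ENNReal.ofReal (f x ^ 2)⁻¹ ∂μ
      ≤ ∑ k ∈ Finset.range (N + 1), ∫⁻ x in A k, ENNReal.ofReal (f x ^ 2)⁻¹ ∂μ := by
        rw [← Finset.tsum_subtype]
        exact (lintegral_mono_set hcover).trans (lintegral_iUnion_le _ _)
    _ ≤ ∑ k ∈ Finset.range (N + 1),
          ENNReal.ofReal (4 * C * ((B / 2 ^ k) ^ d / (B / 2 ^ k) ^ 2)) :=
        Finset.sum_le_sum fun k _ => setLIntegral_dyadicShell_inv_sq_le hf hS (by positivity)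
          (hshell _ (by positivity))
    _ = ENNReal.ofReal (4 * C * dyadicSum d N B) := by
        rw [dyadicSum, Finset.mul_sum, ENNReal.ofReal_sum_of_nonneg fun k _ => by positivity]

end DyadicSummation

section MorseBand

variable {E : Type*} [NormedAddCommGroup E] [InnerProductSpace ℝ E] [FiniteDimensional ℝ E]

theorem inner_fderiv_gradient_apply {T : E → ℝ} (hT : ContDiff ℝ 2 T) (p v w : E) :
    ⟪fderiv ℝ (∇ T) p v, w⟫ = fderiv ℝ (fderiv ℝ T) p v w := by
  have hgrad : DifferentiableAt ℝ (∇ T) p := (contDiff_gradient hT).differentiable one_ne_zero p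
  have hfderiv : DifferentiableAt ℝ (fderiv ℝ T) p :=
    (hT.fderiv_right (m := 1) (by norm_num)).differentiable one_ne_zero p
  have hfun : (fun x => ⟪∇ T x, w⟫) = fun x => fderiv ℝ T x w :=
    funext fun x => inner_gradient_left
  have hinner := fderiv_inner_apply ℝ hgrad (differentiableAt_const w) v
  rw [hfun, fderiv_clm_apply hfderiv (differentiableAt_const w)] at hinner
  simpa using hinner.symm

/-- `T` is `C²`, the band `T ⁻¹' [-ε, ε]` is compact, and the critical points of `T` in the band are
nondegenerate with critical value `0`. Nondegeneracy is expressed through the Hessian operator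
`fderiv ℝ (∇ T) p`. -/
structure IsMorseBand (T : E → ℝ) (ε : ℝ) : Prop where
  contDiff : ContDiff ℝ 2 T
  isCompact : IsCompact (T ⁻¹' Icc (-ε) ε)
  injective_hessian : ∀ p ∈ T ⁻¹' Icc (-ε) ε, ∇ T p = 0 → Function.Injective (fderiv ℝ (∇ T) p)
  criticalValue_eq_zero : ∀ p ∈ T ⁻¹' Icc (-ε) ε, ∇ T p = 0 → T p = 0

namespace IsMorseBand

variable {T : E → ℝ} {ε : ℝ}

theorem exists_norm_gradient_bounds (h : IsMorseBand T ε) :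
    ∃ a B : ℝ, 0 < a ∧ a * √ε ≤ B ∧
      ∀ x ∈ T ⁻¹' Icc (-ε) ε, a * √|T x| ≤ ‖∇ T x‖ ∧ ‖∇ T x‖ ≤ B := by
  obtain ⟨c, hc, hlower⟩ := exists_abs_le_mul_norm_gradient_sq h.contDiff h.isCompact
    h.injective_hessian h.criticalValue_eq_zero
  obtain ⟨B, hB⟩ := h.isCompact.exists_bound_of_continuousOn
    (contDiff_gradient h.contDiff).continuous.continuousOn
  refine ⟨(√c)⁻¹, max B ((√c)⁻¹ * √ε), by positivity, le_max_right _ _, fun x hx =>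
    ⟨?_, (hB x hx).trans (le_max_left _ _)⟩⟩
  rw [inv_mul_le_iff₀ (by positivity), Real.sqrt_le_left (by positivity), mul_pow,
    Real.sq_sqrt hc.le]
  exact hlower x hx

theorem gradient_ne_zero (h : IsMorseBand T ε) {t : ℝ} (ht : t ∈ Icc (-ε) ε) (ht0 : t ≠ 0) :
    ∀ x ∈ T ⁻¹' {t}, ∇ T x ≠ 0 := by
  rintro x rfl hx
  exact ht0 (h.criticalValue_eq_zero x ht hx)

variable [MeasurableSpace E] [BorelSpace E] {d : ℕ}

theorem exists_forall_hausdorffMeasure_shell_le (h : IsMorseBand T ε)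
    (hd : finrank ℝ E = d + 1) :
    ∃ C : ℝ, 0 ≤ C ∧ ∀ s ∈ Icc (-ε) ε, ∀ l, 0 < l →
      μH[d] (T ⁻¹' {s} ∩ (‖∇ T ·‖) ⁻¹' Ioc (l / 2) l) ≤ ENNReal.ofReal (C * l ^ d) := by
  obtain ⟨C, hC, hshell⟩ := exists_forall_hausdorffMeasure_gradientShell_le hd h.contDiff
    h.isCompact h.injective_hessian
  refine ⟨C, hC, fun s hs l hl => ?_⟩
  have hsub : T ⁻¹' {s} ⊆ T ⁻¹' Icc (-ε) ε := preimage_mono (singleton_subset_iff.2 hs)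
  simpa only [inter_eq_right.2 hsub] using hshell l s hl

theorem hausdorffMeasure_levelSet_lt_top (h : IsMorseBand T ε) (hd : finrank ℝ E = d + 1) {s : ℝ}
    (hs : s ∈ Icc (-ε) ε) (hs0 : s ≠ 0) : μH[d] (T ⁻¹' {s}) < ∞ := by
  obtain ⟨C, -, hshell⟩ := h.exists_forall_hausdorffMeasure_shell_le hd
  obtain ⟨a, B, ha, haB, hbounds⟩ := h.exists_norm_gradient_bounds
  have hε : 0 < ε := (abs_pos.2 hs0).trans_le (abs_le.2 hs)
  refine measure_lt_top_of_dyadicShell_le (b := a * √|s|) (by positivity)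
    ((by positivity : 0 < a * √ε).trans_le haB) (fun x hx => ?_)
    (fun x hx => (hbounds x ?_).2) (hshell s hs)
  · obtain rfl : T x = s := hx
    exact (hbounds x hs).1
  · obtain rfl : T x = s := hx
    exact hs

theorem exists_setIntegral_inv_norm_gradient_sq_le (h : IsMorseBand T ε) (hε : 0 < ε)
    (hd : finrank ℝ E = d + 1) :
    ∃ A B C : ℝ, 0 < A ∧ 0 < B ∧ 0 ≤ C ∧ ∀ s ∈ Icc (-ε) ε, s ≠ 0 → ∃ N : ℕ, 2 ^ N ≤ A / √|s| ∧
      ∫ x in T ⁻¹' {s}, (‖∇ T x‖ ^ 2)⁻¹ ∂μH[d] ≤ C * dyadicSum d N B := by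
  obtain ⟨C, hC, hshell⟩ := h.exists_forall_hausdorffMeasure_shell_le hd
  obtain ⟨a, B, ha, haB, hbounds⟩ := h.exists_norm_gradient_bounds
  have hB : 0 < B := (by positivity : 0 < a * √ε).trans_le haB
  refine ⟨B / a, B, 4 * C, by positivity, hB, by positivity, fun s hs hs0 => ?_⟩
  have hband : ∀ x ∈ T ⁻¹' {s}, a * √|s| ≤ ‖∇ T x‖ ∧ ‖∇ T x‖ ≤ B := by
    rintro x rfl
    exact hbounds x hs
  have hb : 0 < a * √|s| := by positivity
  have hbB : a * √|s| ≤ B := le_trans (by gcongr; exact abs_le.2 hs) haB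
  obtain ⟨N, hN, hN'⟩ := exists_nat_pow_near ((one_le_div hb).2 hbB) (one_lt_two (α := ℝ))
  refine ⟨N, by rwa [div_div], setIntegral_inv_sq_le_dyadicSum
    (contDiff_gradient h.contDiff).continuous.norm.measurable
    (h.contDiff.continuous.measurable (measurableSet_singleton s)) hb hB hC
    (fun x hx => (hband x hx).1) (fun x hx => (hband x hx).2) hN' (hshell s hs)⟩

variable {t : ℝ}

theorem eventually_hausdorffMeasure_levelSet_lt_top (h : IsMorseBand T ε)
    (hd : finrank ℝ E = d + 1) (ht : t ∈ Ioo (-ε) ε) (ht0 : t ≠ 0) :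
    ∀ᶠ s in 𝓝 t, μH[d] (T ⁻¹' {s}) < ∞ := by
  filter_upwards [Icc_mem_nhds ht.1 ht.2, isOpen_ne.mem_nhds ht0] with s hs hs0
  exact h.hausdorffMeasure_levelSet_lt_top hd hs hs0

theorem differentiableAt_levelVolume (h : IsMorseBand T ε) (hd : finrank ℝ E = d + 1)
    (ht : t ∈ Ioo (-ε) ε) (ht0 : t ≠ 0) :
    DifferentiableAt ℝ (fun s => (μH[d] (T ⁻¹' {s})).toReal) t :=
  (hasDerivAt_levelVolume h.contDiff hd (h.eventually_hausdorffMeasure_levelSet_lt_top hd ht ht0)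
    (Icc_mem_nhds ht.1 ht.2) h.isCompact
    (h.gradient_ne_zero (Ioo_subset_Icc_self ht) ht0)).differentiableAt

theorem exists_abs_deriv_levelVolume_le (h : IsMorseBand T ε) (hε : 0 < ε)
    (hd : finrank ℝ E = d + 1) :
    ∃ A B C : ℝ, 0 < A ∧ 0 < B ∧ 0 ≤ C ∧ ∀ t ∈ Ioo (-ε) ε, t ≠ 0 → ∃ N : ℕ, 2 ^ N ≤ A / √|t| ∧
      |deriv (fun s => (μH[d] (T ⁻¹' {s})).toReal) t| ≤ C * dyadicSum d N B := by
  obtain ⟨A, B, C, hA, hB, hC, hint⟩ := h.exists_setIntegral_inv_norm_gradient_sq_le hε hd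
  obtain ⟨M, hM⟩ := h.isCompact.exists_bound_of_continuousOn
    ((contDiff_gradient h.contDiff).continuous_fderiv one_ne_zero).continuousOn
  refine ⟨A, B, finrank ℝ E * (2 * max M 0) * C, hA, hB, by positivity, fun t ht ht0 => ?_⟩
  have htε : t ∈ Icc (-ε) ε := Ioo_subset_Icc_self ht
  obtain ⟨N, hN, hNint⟩ := hint t htε ht0
  refine ⟨N, hN, (abs_deriv_levelVolume_le (M := max M 0) h.contDiff hd
    (h.eventually_hausdorffMeasure_levelSet_lt_top hd ht ht0) (Icc_mem_nhds ht.1 ht.2) h.isCompact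
    (h.gradient_ne_zero htε ht0) ?_).trans ?_⟩
  · rintro x rfl
    exact (hM x htε).trans (le_max_left _ _)
  · rw [mul_assoc _ C]
    gcongr

end IsMorseBand

end MorseBand

theorem stmt9_general {E : Type*} [NormedAddCommGroup E] [InnerProductSpace ℝ E]
    [FiniteDimensional ℝ E] [MeasurableSpace E] [BorelSpace E] {d : ℕ}
    (hd : finrank ℝ E = d + 1) (T : E → ℝ) (hT : ContDiff ℝ 2 T) (ε : ℝ) (hε : 0 < ε)
    (hcomp : IsCompact (T ⁻¹' Icc (-ε) ε))
    (hnd : ∀ p : E, T p ∈ Icc (-ε) ε → fderiv ℝ T p = 0 →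
      ∀ v : E, (∀ w : E, fderiv ℝ (fderiv ℝ T) p v w = 0) → v = 0)
    (hcv : ∀ p : E, fderiv ℝ T p = 0 → T p ∈ Icc (-ε) ε → T p = 0) :
    (∀ t ∈ Ioo (-ε) ε, t ≠ 0 →
      DifferentiableAt ℝ (fun s : ℝ => (μH[d] (T ⁻¹' {s})).toReal) t) ∧
    ∃ C > (0 : ℝ), ∃ ε' : ℝ, 0 < ε' ∧ ε' < ε ∧ ∀ t ∈ Ioo (-ε') ε', t ≠ 0 →
      (3 ≤ d → |deriv (fun s : ℝ => (μH[d] (T ⁻¹' {s})).toReal) t| ≤ C) ∧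
      (d = 2 → |deriv (fun s : ℝ => (μH[d] (T ⁻¹' {s})).toReal) t| ≤ C * Real.log (1 / |t|)) ∧
      (d = 1 → |deriv (fun s : ℝ => (μH[d] (T ⁻¹' {s})).toReal) t| ≤
        C * |t| ^ (-(1 / 2) : ℝ)) := by
  have hband : IsMorseBand T ε := by
    refine ⟨hT, hcomp, fun p hp h0 => (injective_iff_map_eq_zero _).2 fun v hv => ?_,
      fun p hp h0 => hcv p (gradient_eq_zero_iff.1 h0) hp⟩
    refine hnd p hp (gradient_eq_zero_iff.1 h0) v fun w => ?_
    rw [← inner_fderiv_gradient_apply hT, hv, inner_zero_left]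
  refine ⟨fun t ht ht0 => hband.differentiableAt_levelVolume hd ht ht0, ?_⟩
  obtain ⟨A, B, C, hA, hB, hC, hderiv⟩ := hband.exists_abs_deriv_levelVolume_le hε hd
  obtain ⟨C', hC', hsum⟩ := exists_dyadicSum_le d hA hB
  refine ⟨(C + 1) * C', by positivity, min (ε / 2) (1 / 2), by positivity,
    (min_le_left _ _).trans_lt (half_lt_self hε), fun t ht ht0 => ?_⟩
  have htε : |t| < ε := (abs_lt.2 ht).trans_le ((min_le_left _ _).trans (half_le_self hε.le))
  have ht2 : |t| ≤ 1 / 2 := (abs_lt.2 ht).le.trans (min_le_right _ _)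
  obtain ⟨N, hN, hbound⟩ := hderiv t (abs_lt.1 htε) ht0
  have hbound' : |deriv (fun s => (μH[d] (T ⁻¹' {s})).toReal) t| ≤ (C + 1) * dyadicSum d N B :=
    hbound.trans (mul_le_mul_of_nonneg_right (by linarith) (dyadicSum_nonneg hB.le))
  obtain ⟨hge, htwo, hone⟩ := hsum t N ht0 ht2 hN
  simp only [mul_assoc]
  exact ⟨fun h => hbound'.trans (by gcongr; exact hge h),
    fun h => hbound'.trans (by gcongr; exact htwo h),
    fun h => hbound'.trans (by gcongr; exact hone h)⟩

/-- Let `T : ℝ^m → ℝ` (`m ≥ 2`) be `C²` with `T⁻¹([−ε, ε])` compact, all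
critical points with values in `[−ε, ε]` nondegenerate, and `0` the only critical value
of `T` in `[−ε, ε]`. Then `φ(t) = ℋ^{m−1}(T⁻¹(t))` is differentiable at every
`t ∈ (−ε, ε) \ {0}`, and there are `C > 0` and `ε' ∈ (0, ε)` such that for all nonzero
`t ∈ (−ε', ε')`: `|φ'(t)| ≤ C` if `m ≥ 4`, `|φ'(t)| ≤ C log(1/|t|)` if `m = 3`, and
`|φ'(t)| ≤ C |t|^{−1/2}` if `m = 2`. -/
theorem stmt9 {m : ℕ} (hm : 2 ≤ m) (T : EuclideanSpace ℝ (Fin m) → ℝ)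
    (hT : ContDiff ℝ 2 T) (ε : ℝ) (hε : 0 < ε)
    (hcomp : IsCompact (T ⁻¹' Set.Icc (-ε) ε))
    (hnd : ∀ p : EuclideanSpace ℝ (Fin m), T p ∈ Set.Icc (-ε) ε → fderiv ℝ T p = 0 →
      ∀ v : EuclideanSpace ℝ (Fin m),
        (∀ w : EuclideanSpace ℝ (Fin m), fderiv ℝ (fun y => fderiv ℝ T y) p v w = 0) →
        v = 0)
    (hcv : ∀ p : EuclideanSpace ℝ (Fin m), fderiv ℝ T p = 0 →
      T p ∈ Set.Icc (-ε) ε → T p = 0) :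
    (∀ t ∈ Set.Ioo (-ε) ε, t ≠ 0 →
      DifferentiableAt ℝ (fun s : ℝ => (μH[(m : ℝ) - 1] (T ⁻¹' {s})).toReal) t) ∧
    ∃ C > (0 : ℝ), ∃ ε' : ℝ, 0 < ε' ∧ ε' < ε ∧
      ∀ t ∈ Set.Ioo (-ε') ε', t ≠ 0 →
        (4 ≤ m →
          |deriv (fun s : ℝ => (μH[(m : ℝ) - 1] (T ⁻¹' {s})).toReal) t| ≤ C) ∧
        (m = 3 →
          |deriv (fun s : ℝ => (μH[(m : ℝ) - 1] (T ⁻¹' {s})).toReal) t| ≤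
            C * Real.log (1 / |t|)) ∧
        (m = 2 →
          |deriv (fun s : ℝ => (μH[(m : ℝ) - 1] (T ⁻¹' {s})).toReal) t| ≤
            C * |t| ^ (-(1 / 2) : ℝ)) := by
  obtain ⟨d, rfl⟩ : ∃ d, m = d + 1 := ⟨m - 1, by omega⟩
  simpa using stmt9_general (d := d) (by simp) T hT ε hε hcomp hnd hcv
end
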